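/- arXiv:math/9811074 — 2 statements merged into one kernel-verified Lean document; each statement's English description precedes it below -/
import Mathlib

section
/- Let p₀,p₁,p₂,p₃ ∈ ℝ³ be the vertices of a regular tetrahedron T with edge length 2. Then vol(T) = 2√2/3, vol(T ∩ (B(p₀,1) ∪ B(p₁,1) ∪ B(p₂,1) ∪ B(p₃,1))) = (4/3)·(3·arccos(1/3) − π), and consequently Γ(T) = (4/3)·(3·arccos(1/3) − π) − δ_oct·(2√2/3), a number lying strictly between 0.0553 and 0.0554 (this quantity is called one point, 1 pt ≈ 0.0553736). -/
open MeasureTheory Real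

noncomputable section

abbrev E3 : Type := EuclideanSpace ℝ (Fin 3)

/-- The density of the regular octahedron. -/
def δoct : ℝ := (-3 * π + 12 * arccos (1 / Real.sqrt 3)) / Real.sqrt 8

/-- The compression `Γ(S)` of the simplex `S = conv {p₀, p₁, p₂, p₃}`:
`Γ(S) = -δ_oct · vol S + vol (S ∩ (B(p₀,1) ∪ B(p₁,1) ∪ B(p₂,1) ∪ B(p₃,1)))`. -/
def Gamma (p₀ p₁ p₂ p₃ : E3) : ℝ :=
  -δoct * (volume (convexHull ℝ ({p₀, p₁, p₂, p₃} : Set E3))).toReal +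
    (volume (convexHull ℝ ({p₀, p₁, p₂, p₃} : Set E3) ∩
      (Metric.closedBall p₀ 1 ∪ Metric.closedBall p₁ 1 ∪ Metric.closedBall p₂ 1 ∪
        Metric.closedBall p₃ 1))).toReal

/-!
A corner of the tetrahedron is cut out by three half-spaces with inward normals `n₁, n₂, n₃`. In
polar coordinates of the plane spanned by two normals, two half-spaces meet a centered ball in the
fraction `(π - ∠(nᵢ, nⱼ)) / 2π` of its volume. Negation carries each half-space to its complement up
to a null set, so inclusion–exclusion expresses the triple intersection by the pairwise ones; this
is Girard's formula. For a regular simplex the Gram matrix of the edges leaving a vertex is a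
multiple of `1 + J`, where `J` is the all-ones matrix, which gives the volume, the normals and the
angles between them. For the numerical bounds, half the compression is `3 arccos (1/3) - 7π/6`,
whose sine is the algebraic number `(10√6 - 23) / 54`.
-/

open Metric Module Set InnerProductGeometry
open scoped ENNReal RealInnerProductSpace

section LinearIsometry

variable {E V : Type*} [NormedAddCommGroup E] [InnerProductSpace ℝ E]
  [NormedAddCommGroup V] [InnerProductSpace ℝ V]

theorem inner_eq_zero_of_mem_orthogonal_range (j : E →ₗᵢ[ℝ] V) (z : E) {w : V}
    (hw : w ∈ j.rangeᗮ) : ⟪j z, w⟫ = 0 :=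
  Submodule.inner_right_of_mem_orthogonal (K := j.range) ⟨z, rfl⟩ hw

theorem norm_add_orthogonal_congr (j : E →ₗᵢ[ℝ] V) (w : j.rangeᗮ) {z z' : E} (h : ‖z‖ = ‖z'‖) :
    ‖j z + w‖ = ‖j z' + w‖ := by
  have h_sq (y : E) : ‖j y + w‖ * ‖j y + w‖ = ‖y‖ * ‖y‖ + ‖(w : V)‖ * ‖(w : V)‖ := by
    rw [norm_add_sq_eq_norm_sq_add_norm_sq_real (inner_eq_zero_of_mem_orthogonal_range j y w.2),
      j.norm_map]
  rw [← mul_self_inj (norm_nonneg _) (norm_nonneg _), h_sq, h_sq, h]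

variable [FiniteDimensional ℝ E] [FiniteDimensional ℝ V]

theorem exists_linearIsometry_of_finrank_le (h : finrank ℝ E ≤ finrank ℝ V) :
    Nonempty (E →ₗᵢ[ℝ] V) := by
  let e := stdOrthonormalBasis ℝ E
  let v := stdOrthonormalBasis ℝ V ∘ Fin.castLE h
  have hv : Orthonormal ℝ v := (stdOrthonormalBasis ℝ V).orthonormal.comp _ (Fin.castLE_injective h)
  have he : Orthonormal ℝ e.toBasis := by simp [e.orthonormal]
  refine ⟨(e.toBasis.constr ℝ v).isometryOfOrthonormal he ?_⟩
  convert hv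
  ext i
  simp

theorem exists_linearIsometry_apply_eq_apply_eq (h : finrank ℝ E ≤ finrank ℝ V) {x y : E} {a b : V}
    (hxa : ‖x‖ = ‖a‖) (hyb : ‖y‖ = ‖b‖) (hxy : ⟪x, y⟫ = ⟪a, b⟫) :
    ∃ j : E →ₗᵢ[ℝ] V, j x = a ∧ j y = b := by
  obtain ⟨j₀⟩ := exists_linearIsometry_of_finrank_le h
  -- Two reflections suffice: the first moves `j₀ x` to `a`, the second fixes `a` and corrects `y`.
  let R := (ℝ ∙ (j₀ x - a))ᗮ.reflection
  have hR : R (j₀ x) = a := Submodule.reflection_sub (by rw [j₀.norm_map, hxa])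
  let R' := (ℝ ∙ (R (j₀ y) - b))ᗮ.reflection
  have hR'b : R' (R (j₀ y)) = b := Submodule.reflection_sub (by rw [R.norm_map, j₀.norm_map, hyb])
  have h_inner : ⟪R (j₀ y) - b, a⟫ = 0 := by
    rw [inner_sub_left, real_inner_comm, ← hR, R.inner_map_map, j₀.inner_map_map, hR, hxy,
      real_inner_comm, sub_self]
  have hR'a : R' a = a := Submodule.reflection_mem_subspace_eq_self
    (Submodule.mem_orthogonal_singleton_iff_inner_right.2 h_inner)
  exact ⟨(R'.toLinearIsometry.comp R.toLinearIsometry).comp j₀, by simp [hR, hR'a], by simp [hR'b]⟩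

variable [MeasurableSpace E] [BorelSpace E] [MeasurableSpace V] [BorelSpace V]

theorem measurePreserving_add_orthogonal (j : E →ₗᵢ[ℝ] V) :
    MeasurePreserving fun q : E × j.rangeᗮ ↦ j q.1 + q.2 :=
  j.range.orthogonalDecomposition.symm.measurePreserving.comp
    ((WithLp.volume_preserving_toLp _ _).comp
      (j.equivRange.measurePreserving.prod (MeasurePreserving.id volume)))

end LinearIsometry

section Plane

theorem lintegral_eq_mul_of_polarCoord_symm {f : ℂ → ℝ≥0∞} {g h : ℝ → ℝ≥0∞}
    (hg : Measurable g) (hh : Measurable h)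
    (hf : ∀ s > 0, ∀ θ ∈ Ioo (-π) π, f (Complex.polarCoord.symm (s, θ)) = g s * h θ) :
    ∫⁻ z, f z = (∫⁻ s in Ioi 0, .ofReal s * g s) * ∫⁻ θ in Ioo (-π) π, h θ :=
  calc ∫⁻ z, f z
      = ∫⁻ q in polarCoord.target, .ofReal q.1 * g q.1 * h q.2 := by
        rw [← Complex.lintegral_comp_polarCoord_symm]
        refine setLIntegral_congr_fun polarCoord.open_target.measurableSet fun q hq ↦ ?_
        rw [hf q.1 hq.1 q.2 hq.2, smul_eq_mul, mul_assoc]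
    _ = _ := by
        rw [polarCoord_target, Measure.volume_eq_prod, ← Measure.prod_restrict]
        exact lintegral_prod_mul (f := fun s ↦ ENNReal.ofReal s * g s)
          (ENNReal.measurable_ofReal.mul hg).aemeasurable hh.aemeasurable

theorem inner_polarCoord_symm (s θ t φ : ℝ) :
    ⟪Complex.polarCoord.symm (s, θ), Complex.polarCoord.symm (t, φ)⟫ = s * t * cos (θ - φ) := by
  have h_re (u ψ : ℝ) : (Complex.polarCoord.symm (u, ψ)).re = u * cos ψ := by
    simp [Complex.polarCoord_symm_apply, Complex.cos_ofReal_re]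
  have h_im (u ψ : ℝ) : (Complex.polarCoord.symm (u, ψ)).im = u * sin ψ := by
    simp [Complex.polarCoord_symm_apply, Complex.sin_ofReal_re]
  rw [Complex.inner, Complex.mul_re, Complex.conj_re, Complex.conj_im, h_re, h_re, h_im, h_im,
    cos_sub]
  ring

theorem exists_linearIsometry_polarCoord_symm {V : Type*} [NormedAddCommGroup V]
    [InnerProductSpace ℝ V] [FiniteDimensional ℝ V] (h_dim : 2 ≤ finrank ℝ V) (a b : V) :
    ∃ j : ℂ →ₗᵢ[ℝ] V, j (Complex.polarCoord.symm (‖a‖, 0)) = a ∧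
      j (Complex.polarCoord.symm (‖b‖, angle a b)) = b := by
  apply exists_linearIsometry_apply_eq_apply_eq
  · rwa [Complex.finrank_real_complex]
  · rw [Complex.norm_polarCoord_symm, abs_norm]
  · rw [Complex.norm_polarCoord_symm, abs_norm]
  · rw [inner_polarCoord_symm, zero_sub, cos_neg, mul_comm, cos_angle_mul_norm_mul_norm]

theorem cos_pos_and_cos_sub_pos_iff {θ φ : ℝ} (hθ : θ ∈ Ioo (-π) π) (hφ : φ ∈ Icc 0 π) :
    0 < cos θ ∧ 0 < cos (φ - θ) ↔ θ ∈ Ioo (φ - π / 2) (π / 2) := by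
  obtain ⟨hθ_gt, hθ_lt⟩ := hθ
  obtain ⟨hφ_nonneg, hφ_le⟩ := hφ
  constructor
  · rintro ⟨h_cos, h_cos_sub⟩
    have hθ_gt' : -(π / 2) < θ := by
      contrapose! h_cos
      rw [← cos_neg]
      exact cos_nonpos_of_pi_div_two_le_of_le (by linarith) (by linarith)
    constructor
    · contrapose! h_cos_sub
      exact cos_nonpos_of_pi_div_two_le_of_le (by linarith) (by linarith)
    · contrapose! h_cos
      exact cos_nonpos_of_pi_div_two_le_of_le h_cos (by linarith)
  · rintro ⟨h_gt, h_lt⟩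
    exact ⟨cos_pos_of_mem_Ioo ⟨by linarith, h_lt⟩, cos_pos_of_mem_Ioo ⟨by linarith, by linarith⟩⟩

end Plane

theorem two_mul_measureReal_inter_of_preimage_ae_eq_compl {X : Type*} [MeasurableSpace X]
    {μ : Measure X} [IsFiniteMeasure μ] {σ : X → X} (hσ : MeasurePreserving σ μ μ) {A B C : Set X}
    (hA : MeasurableSet A) (hB : MeasurableSet B) (hC : MeasurableSet C)
    (hσA : σ ⁻¹' A =ᵐ[μ] (Aᶜ : Set X)) (hσB : σ ⁻¹' B =ᵐ[μ] (Bᶜ : Set X))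
    (hσC : σ ⁻¹' C =ᵐ[μ] (Cᶜ : Set X)) :
    2 * μ.real (A ∩ B ∩ C) + μ.real univ / 2 =
      μ.real (A ∩ B) + μ.real (A ∩ C) + μ.real (B ∩ C) := by
  have h_half {S : Set X} (hS : MeasurableSet S) (hσS : σ ⁻¹' S =ᵐ[μ] (Sᶜ : Set X)) :
      μ.real S = μ.real univ / 2 := by
    have h_compl : μ.real S = μ.real Sᶜ := by
      rw [← hσ.measureReal_preimage hS.nullMeasurableSet, measureReal_congr hσS]
    linarith [measureReal_add_measureReal_compl (μ := μ) hS]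
  have h_triple : μ.real (A ∩ B ∩ C) = μ.real (A ∪ B ∪ C)ᶜ := by
    rw [← hσ.measureReal_preimage ((hA.inter hB).inter hC).nullMeasurableSet, compl_union,
      compl_union]
    exact measureReal_congr ((hσA.inter hσB).inter hσC)
  have h_inter : (A ∪ B) ∩ C = A ∩ C ∪ B ∩ C := union_inter_distrib_right A B C
  have h_inter' : A ∩ C ∩ (B ∩ C) = A ∩ B ∩ C := (inter_inter_distrib_right A B C).symm
  have h_AB := measureReal_union_add_inter (μ := μ) (s := A) hB
  have h_ABC := measureReal_union_add_inter (μ := μ) (s := A ∪ B) hC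
  have h_AC_BC := measureReal_union_add_inter (μ := μ) (s := A ∩ C) (hB.inter hC)
  rw [h_inter] at h_ABC
  rw [h_inter'] at h_AC_BC
  linarith [h_half hA hσA, h_half hB hσB, h_half hC hσC,
    measureReal_add_measureReal_compl (μ := μ) ((hA.union hB).union hC)]

section HalfSpace

variable {V : Type*} [NormedAddCommGroup V] [InnerProductSpace ℝ V]

/-- The open half-space of the vectors making an acute angle with `a`. -/
def openHalfSpace (a : V) : Set V := {x | 0 < ⟪a, x⟫}

variable [FiniteDimensional ℝ V] [MeasurableSpace V] [BorelSpace V]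

theorem measurableSet_openHalfSpace (a : V) : MeasurableSet (openHalfSpace a) :=
  measurableSet_lt measurable_const (by fun_prop)

theorem openHalfSpace_ae_eq {a : V} (ha : a ≠ 0) :
    openHalfSpace a =ᵐ[volume] {x | 0 ≤ ⟪a, x⟫} := by
  have h_proper : (ℝ ∙ a)ᗮ ≠ ⊤ := by
    rwa [Ne, Submodule.orthogonal_eq_top_iff, Submodule.span_singleton_eq_bot]
  filter_upwards [measure_eq_zero_iff_ae_notMem.1 (Measure.addHaar_submodule volume _ h_proper)]
    with x hx
  have h_ne : 0 ≠ ⟪a, x⟫ := fun h ↦ hx (Submodule.mem_orthogonal_singleton_iff_inner_right.2 h.symm)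
  exact propext ⟨le_of_lt, fun h ↦ lt_of_le_of_ne h h_ne⟩

theorem neg_preimage_openHalfSpace_ae_eq {a : V} (ha : a ≠ 0) :
    Neg.neg ⁻¹' openHalfSpace a =ᵐ[volume] ((openHalfSpace a)ᶜ : Set V) := by
  have h_preimage : Neg.neg ⁻¹' openHalfSpace a = {x | 0 ≤ ⟪a, x⟫}ᶜ := by
    ext x
    simp [openHalfSpace]
  rw [h_preimage]
  exact (openHalfSpace_ae_eq ha).symm.compl

theorem measurePreserving_neg_restrict_closedBall (r : ℝ) :
    MeasurePreserving Neg.neg (volume.restrict (closedBall (0 : V) r))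
      (volume.restrict (closedBall 0 r)) := by
  simpa using (Measure.measurePreserving_neg volume).restrict_preimage
    (measurableSet_closedBall (x := (0 : V)) (ε := r))

theorem volume_inter_closedBall_eq_mul_of_polarCoord (j : ℂ →ₗᵢ[ℝ] V) {H : Set V} {I : Set ℝ}
    (hH : MeasurableSet H) (hI : MeasurableSet I)
    (h_mem : ∀ s > 0, ∀ θ ∈ Ioo (-π) π, ∀ w ∈ j.rangeᗮ,
      (j (Complex.polarCoord.symm (s, θ)) + w ∈ H ↔ θ ∈ I)) (r : ℝ) :
    volume (H ∩ closedBall 0 r) =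
      (∫⁻ s in Ioi (0 : ℝ), .ofReal s * volume {w : j.rangeᗮ | ‖j (s : ℂ) + w‖ ≤ r}) *
        volume (I ∩ Ioo (-π) π) := by
  have h_measurable : MeasurableSet {q : ℝ × j.rangeᗮ | ‖j (q.1 : ℂ) + q.2‖ ≤ r} :=
    measurableSet_le (by fun_prop) measurable_const
  have h_slice : ∀ s > 0, ∀ θ ∈ Ioo (-π) π,
      volume {w : j.rangeᗮ | j (Complex.polarCoord.symm (s, θ)) + w ∈ H ∩ closedBall 0 r} =
        volume {w : j.rangeᗮ | ‖j (s : ℂ) + w‖ ≤ r} * I.indicator 1 θ := fun s hs θ hθ ↦ by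
    have h_norm : ‖Complex.polarCoord.symm (s, θ)‖ = ‖(s : ℂ)‖ := by
      rw [Complex.norm_polarCoord_symm, Complex.norm_real, Real.norm_eq_abs]
    simp only [mem_inter_iff, mem_closedBall_zero_iff, h_mem s hs θ hθ _ (Subtype.prop _),
      norm_add_orthogonal_congr j _ h_norm]
    by_cases hθI : θ ∈ I <;> simp [hθI]
  have h_preserving := measurePreserving_add_orthogonal j
  have h_inter := hH.inter (measurableSet_closedBall (x := (0 : V)) (ε := r))
  rw [← h_preserving.measure_preimage h_inter.nullMeasurableSet, Measure.volume_eq_prod,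
    Measure.prod_apply (h_preserving.measurable h_inter),
    ← Measure.restrict_apply hI, ← lintegral_indicator_one hI]
  exact lintegral_eq_mul_of_polarCoord_symm
    (g := fun s ↦ volume {w : j.rangeᗮ | ‖j (s : ℂ) + w‖ ≤ r})
    (measurable_measure_prodMk_left h_measurable)
    (measurable_one.indicator hI) h_slice

theorem volume_inter_closedBall_mul_two_pi (j : ℂ →ₗᵢ[ℝ] V) {H : Set V} {I : Set ℝ}
    (hH : MeasurableSet H) (hI : MeasurableSet I)
    (h_mem : ∀ s > 0, ∀ θ ∈ Ioo (-π) π, ∀ w ∈ j.rangeᗮ,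
      (j (Complex.polarCoord.symm (s, θ)) + w ∈ H ↔ θ ∈ I)) (r : ℝ) :
    volume (H ∩ closedBall 0 r) * .ofReal (2 * π) =
      volume (I ∩ Ioo (-π) π) * volume (closedBall (0 : V) r) := by
  have h_ball := volume_inter_closedBall_eq_mul_of_polarCoord j .univ .univ
    (fun _ _ _ _ _ _ ↦ iff_of_true (mem_univ _) (mem_univ _)) r
  rw [univ_inter, univ_inter, volume_Ioo, sub_neg_eq_add, ← two_mul] at h_ball
  rw [volume_inter_closedBall_eq_mul_of_polarCoord j hH hI h_mem, h_ball]
  ring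

theorem volume_real_openHalfSpace_inter_inter_closedBall (h_dim : 2 ≤ finrank ℝ V) {a b : V}
    (ha : a ≠ 0) (hb : b ≠ 0) (r : ℝ) :
    volume.real (openHalfSpace a ∩ openHalfSpace b ∩ closedBall 0 r) =
      (π - angle a b) / (2 * π) * volume.real (closedBall (0 : V) r) := by
  set φ := angle a b
  have hφ : φ ∈ Icc 0 π := ⟨angle_nonneg a b, angle_le_pi a b⟩
  obtain ⟨j, hja, hjb⟩ := exists_linearIsometry_polarCoord_symm h_dim a b
  have h_mem : ∀ s > 0, ∀ θ ∈ Ioo (-π) π, ∀ w ∈ j.rangeᗮ,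
      (j (Complex.polarCoord.symm (s, θ)) + w ∈ openHalfSpace a ∩ openHalfSpace b ↔
        θ ∈ Ioo (φ - π / 2) (π / 2)) := fun s hs θ hθ w hw ↦ by
    have h_inner (t ψ : ℝ) : ⟪j (Complex.polarCoord.symm (t, ψ)),
        j (Complex.polarCoord.symm (s, θ)) + w⟫ = t * s * cos (ψ - θ) := by
      rw [inner_add_right, j.inner_map_map, inner_eq_zero_of_mem_orthogonal_range j _ hw, add_zero,
        inner_polarCoord_symm]
    have ha_iff : 0 < ‖a‖ * s * cos (0 - θ) ↔ 0 < cos θ := by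
      rw [zero_sub, cos_neg, mul_pos_iff_of_pos_left (by positivity)]
    have hb_iff : 0 < ‖b‖ * s * cos (φ - θ) ↔ 0 < cos (φ - θ) :=
      mul_pos_iff_of_pos_left (by positivity)
    rw [← cos_pos_and_cos_sub_pos_iff hθ hφ, ← ha_iff, ← hb_iff, ← h_inner, ← h_inner, hja, hjb]
    rfl
  have h_sector := volume_inter_closedBall_mul_two_pi j
    ((measurableSet_openHalfSpace a).inter (measurableSet_openHalfSpace b)) measurableSet_Ioo
    h_mem r
  have h_subset : Ioo (φ - π / 2) (π / 2) ⊆ Ioo (-π) π :=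
    Ioo_subset_Ioo (by linarith [hφ.1, pi_pos]) (by linarith [pi_pos])
  rw [inter_eq_left.2 h_subset, volume_Ioo] at h_sector
  have h_real := congrArg ENNReal.toReal h_sector
  rw [ENNReal.toReal_mul, ENNReal.toReal_mul, ENNReal.toReal_ofReal (by positivity),
    ENNReal.toReal_ofReal (by linarith [hφ.2])] at h_real
  rw [measureReal_def, measureReal_def]
  field_simp
  linarith

theorem volume_real_openHalfSpace_inter_inter_inter_closedBall (h_dim : 2 ≤ finrank ℝ V) {a b c : V}
    (ha : a ≠ 0) (hb : b ≠ 0) (hc : c ≠ 0) (r : ℝ) :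
    volume.real (openHalfSpace a ∩ openHalfSpace b ∩ openHalfSpace c ∩ closedBall 0 r) =
      (2 * π - angle a b - angle a c - angle b c) / (4 * π) *
        volume.real (closedBall (0 : V) r) := by
  have : IsFiniteMeasure (volume.restrict (closedBall (0 : V) r)) :=
    isFiniteMeasure_restrict.2 measure_closedBall_lt_top.ne
  have h_girard := two_mul_measureReal_inter_of_preimage_ae_eq_compl
    (measurePreserving_neg_restrict_closedBall r) (measurableSet_openHalfSpace a)
    (measurableSet_openHalfSpace b) (measurableSet_openHalfSpace c)
    (ae_restrict_of_ae (neg_preimage_openHalfSpace_ae_eq ha))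
    (ae_restrict_of_ae (neg_preimage_openHalfSpace_ae_eq hb))
    (ae_restrict_of_ae (neg_preimage_openHalfSpace_ae_eq hc))
  simp only [measureReal_restrict_apply' measurableSet_closedBall, univ_inter,
    volume_real_openHalfSpace_inter_inter_closedBall h_dim ha hb,
    volume_real_openHalfSpace_inter_inter_closedBall h_dim ha hc,
    volume_real_openHalfSpace_inter_inter_closedBall h_dim hb hc] at h_girard
  field_simp at h_girard ⊢
  linarith

theorem aedisjoint_closedBall_closedBall {x y : V} {r s : ℝ} (hr : r ≠ 0) (h : r + s ≤ dist x y) :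
    AEDisjoint volume (closedBall x r) (closedBall y s) := by
  refine measure_mono_null ?_ (Measure.addHaar_sphere_of_ne_zero volume x hr)
  rw [← closedBall_sdiff_ball]
  exact fun z hz ↦ ⟨hz.1, fun hz' ↦ (ball_disjoint_closedBall h).le_bot ⟨hz', hz.2⟩⟩

end HalfSpace

section Simplex

open scoped Nat

/-- The simplex cut off from the positive orthant of `ℝⁿ` by the hyperplane `∑ i, c i = t`. -/
def cornerSimplex (n : ℕ) (t : ℝ) : Set (Fin n → ℝ) := {c | (∀ i, 0 ≤ c i) ∧ ∑ i, c i ≤ t}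

theorem measurableSet_cornerSimplex (n : ℕ) (t : ℝ) : MeasurableSet (cornerSimplex n t) := by
  simp only [cornerSimplex, ofPred_and, ofPred_forall]
  exact .inter (.iInter fun i ↦ measurableSet_le measurable_const (measurable_pi_apply i))
    (measurableSet_le (by fun_prop) measurable_const)

theorem nonneg_of_mem_cornerSimplex {n : ℕ} {t : ℝ} {c : Fin n → ℝ} (hc : c ∈ cornerSimplex n t) :
    0 ≤ t :=
  (Finset.sum_nonneg fun i _ ↦ hc.1 i).trans hc.2

theorem cons_mem_cornerSimplex {n : ℕ} {t x : ℝ} {c : Fin n → ℝ} :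
    Fin.cons x c ∈ cornerSimplex (n + 1) t ↔ 0 ≤ x ∧ c ∈ cornerSimplex n (t - x) := by
  simp [cornerSimplex, Fin.forall_fin_succ, Fin.sum_univ_succ, le_sub_iff_add_le', and_assoc]

theorem lintegral_Icc_sub_pow_div_factorial (n : ℕ) {t : ℝ} (ht : 0 ≤ t) :
    ∫⁻ x in Icc 0 t, .ofReal ((t - x) ^ n / n !) = .ofReal (t ^ (n + 1) / (n + 1)!) := by
  have h_integral : ∫ x in 0..t, (t - x) ^ n / n ! = t ^ (n + 1) / (n + 1)! := by
    rw [intervalIntegral.integral_div, intervalIntegral.integral_comp_sub_left (· ^ n) t,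
      integral_pow, Nat.factorial_succ]
    push_cast
    field_simp
    simp
  rw [← h_integral, intervalIntegral.integral_of_le ht, ← integral_Icc_eq_integral_Ioc,
    ofReal_integral_eq_lintegral_ofReal]
  · exact ContinuousOn.integrableOn_Icc (by fun_prop)
  · filter_upwards [ae_restrict_mem measurableSet_Icc] with x hx
    exact div_nonneg (pow_nonneg (sub_nonneg.2 hx.2) n) (Nat.cast_nonneg _)

theorem volume_cornerSimplex (n : ℕ) {t : ℝ} (ht : 0 ≤ t) :
    volume (cornerSimplex n t) = .ofReal (t ^ n / n !) := by
  induction n generalizing t with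
  | zero => simp [cornerSimplex, ht, volume_pi]
  | succ n ih =>
    let e := (MeasurableEquiv.piFinSuccAbove (fun _ : Fin (n + 1) ↦ ℝ) 0).symm
    have he : MeasurePreserving e := (volume_preserving_piFinSuccAbove _ 0).symm
    have h_slice (x : ℝ) : volume (Prod.mk x ⁻¹' (e ⁻¹' cornerSimplex (n + 1) t)) =
        (Icc 0 t).indicator (fun x ↦ .ofReal ((t - x) ^ n / n !)) x := by
      have h_preimage : Prod.mk x ⁻¹' (e ⁻¹' cornerSimplex (n + 1) t) =
          {c | 0 ≤ x ∧ c ∈ cornerSimplex n (t - x)} := by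
        ext c
        simp [e, ← cons_mem_cornerSimplex, MeasurableEquiv.piFinSuccAbove, Fin.consEquiv]
      rw [h_preimage]
      by_cases hx : x ∈ Icc 0 t
      · simp only [hx.1, true_and, ofPred_mem_eq, indicator_of_mem hx, ih (sub_nonneg.2 hx.2)]
      · rw [indicator_of_notMem hx]
        convert measure_empty (μ := volume)
        refine eq_empty_of_forall_notMem ?_
        rintro c ⟨hx_nonneg, hc⟩
        exact hx ⟨hx_nonneg, sub_nonneg.1 (nonneg_of_mem_cornerSimplex hc)⟩
    rw [← he.measure_preimage (measurableSet_cornerSimplex _ _).nullMeasurableSet,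
      Measure.volume_eq_prod, Measure.prod_apply (he.measurable (measurableSet_cornerSimplex _ _)),
      ← lintegral_Icc_sub_pow_div_factorial n ht, ← lintegral_indicator measurableSet_Icc]
    exact lintegral_congr h_slice

theorem convexHull_range_eq_image_stdSimplex {ι E : Type*} [Fintype ι] [AddCommGroup E] [Module ℝ E]
    (p : ι → E) : convexHull ℝ (range p) = Fintype.linearCombination ℝ p '' stdSimplex ℝ ι := by
  classical
  rw [← convexHull_rangle_single_eq_stdSimplex, LinearMap.image_convexHull, ← range_comp]
  congr 2
  ext i
  simp

theorem convexHull_range_eq_image_cornerSimplex {E : Type*} [AddCommGroup E] [Module ℝ E] {n : ℕ}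
    (p : Fin (n + 1) → E) :
    convexHull ℝ (range p) =
      (p 0 + ·) '' (Fintype.linearCombination ℝ (fun i ↦ p i.succ - p 0) '' cornerSimplex n 1) := by
  have h_sum (w : Fin (n + 1) → ℝ) (hw : ∑ i, w i = 1) :
      p 0 + ∑ i : Fin n, w i.succ • (p i.succ - p 0) = ∑ i, w i • p i := by
    rw [Fin.sum_univ_succ] at hw ⊢
    simp only [smul_sub, Finset.sum_sub_distrib, ← Finset.sum_smul]
    rw [eq_sub_iff_add_eq'.2 hw]
    module
  rw [convexHull_range_eq_image_stdSimplex, image_image]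
  ext x
  constructor
  · rintro ⟨w, ⟨hw_nonneg, hw_sum⟩, rfl⟩
    refine ⟨Fin.tail w, ⟨fun i ↦ hw_nonneg i.succ, ?_⟩, h_sum w hw_sum⟩
    rw [← hw_sum, Fin.sum_univ_succ]
    exact le_add_of_nonneg_left (hw_nonneg 0)
  · rintro ⟨c, ⟨hc_nonneg, hc_sum⟩, rfl⟩
    have h_cons : ∑ i, (Fin.cons (1 - ∑ i, c i) c : Fin (n + 1) → ℝ) i = 1 := by
      simp [Fin.sum_univ_succ]
    refine ⟨_, ⟨Fin.cases (sub_nonneg.2 hc_sum) hc_nonneg, h_cons⟩, (h_sum _ h_cons).symm⟩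

variable {V : Type*} [NormedAddCommGroup V] [InnerProductSpace ℝ V] [FiniteDimensional ℝ V]
  [MeasurableSpace V] [BorelSpace V]

theorem volume_linearCombination_image {ι : Type*} [Fintype ι] [DecidableEq ι]
    (h_card : finrank ℝ V = Fintype.card ι) (v : ι → V) (S : Set (ι → ℝ)) :
    volume (Fintype.linearCombination ℝ v '' S) = .ofReal √(Matrix.gram ℝ v).det * volume S := by
  let f : EuclideanSpace ℝ ι →ₗ[ℝ] V :=
    Fintype.linearCombination ℝ v ∘ₗ (WithLp.linearEquiv 2 ℝ (ι → ℝ)).toLinearMap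
  have h_gram : f.normDet = √(Matrix.gram ℝ v).det := by
    have h_sq := f.normDet_sq_eq_det_gram (EuclideanSpace.basisFun ι ℝ)
    simp only [RCLike.ofReal_real_eq_id, id_eq] at h_sq
    rw [← Real.sqrt_sq f.normDet_nonneg, h_sq]
    congr
    ext i
    simp [f]
  have h_image := f.euclideanHausdorffMeasure_image (WithLp.ofLp ⁻¹' S)
  have h_finrank : finrank ℝ (EuclideanSpace ℝ ι) = finrank ℝ V := by
    rw [h_card, finrank_euclideanSpace]
  rw [InnerProductSpace.euclideanHausdorffMeasure_eq_volume, h_finrank,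
    InnerProductSpace.euclideanHausdorffMeasure_eq_volume, h_gram] at h_image
  have h_volume : volume (WithLp.ofLp ⁻¹' S : Set (EuclideanSpace ℝ ι)) = volume S :=
    (EuclideanSpace.volume_preserving_symm_measurableEquiv_toLp ι).measure_preimage_equiv S
  rw [← h_volume, ← h_image]
  conv_lhs => rw [← image_preimage_eq S (WithLp.ofLp_surjective 2), ← image_comp]
  rfl

theorem volume_real_convexHull_range {n : ℕ} (h_dim : finrank ℝ V = n) (p : Fin (n + 1) → V) :
    volume.real (convexHull ℝ (range p)) =
      √(Matrix.gram ℝ fun i : Fin n ↦ p i.succ - p 0).det / n ! := by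
  have h_card : finrank ℝ V = Fintype.card (Fin n) := by rw [h_dim, Fintype.card_fin]
  rw [convexHull_range_eq_image_cornerSimplex, measureReal_def, image_add_left,
    measure_preimage_add, volume_linearCombination_image h_card,
    volume_cornerSimplex n zero_le_one, ← ENNReal.ofReal_mul (Real.sqrt_nonneg _),
    ENNReal.toReal_ofReal (by positivity), one_pow, mul_one_div]

end Simplex

section RegularCorner

variable {V ι : Type*} [NormedAddCommGroup V] {v : ι → V} {a : ℝ}

/-- The vectors `v i` are the edges leaving a vertex of a regular simplex of edge length `a`. -/
def IsRegularCorner (v : ι → V) (a : ℝ) : Prop :=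
  (∀ i, ‖v i‖ = a) ∧ Pairwise fun i j ↦ dist (v i) (v j) = a

theorem isRegularCorner_of_pairwise_dist_eq {n : ℕ} {p : Fin (n + 1) → V}
    (hp : Pairwise fun i j ↦ dist (p i) (p j) = a) :
    IsRegularCorner (fun i : Fin n ↦ p i.succ - p 0) a := by
  constructor
  · intro i
    rw [← dist_eq_norm, hp i.succ_ne_zero]
  · intro i j hij
    rw [dist_sub_right, hp (Fin.succ_injective n |>.ne hij)]

variable [InnerProductSpace ℝ V]

theorem IsRegularCorner.inner_eq [DecidableEq ι] (hv : IsRegularCorner v a) (i j : ι) :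
    ⟪v i, v j⟫ = a ^ 2 / 2 * ((if i = j then 1 else 0) + 1) := by
  obtain ⟨h_norm, h_dist⟩ := hv
  by_cases hij : i = j
  · rw [hij, if_pos rfl, real_inner_self_eq_norm_sq, h_norm]
    ring
  · rw [if_neg hij, real_inner_eq_norm_mul_self_add_norm_mul_self_sub_norm_sub_mul_self_div_two,
      ← dist_eq_norm, h_norm, h_norm, h_dist hij]
    ring

variable [Fintype ι]

theorem IsRegularCorner.det_gram [DecidableEq ι] (hv : IsRegularCorner v a) :
    (Matrix.gram ℝ v).det = (a ^ 2 / 2) ^ Fintype.card ι * (Fintype.card ι + 1) := by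
  have h_gram : Matrix.gram ℝ v = (a ^ 2 / 2) •
      (1 + Matrix.replicateCol Unit (1 : ι → ℝ) * Matrix.replicateRow Unit (1 : ι → ℝ)) := by
    ext i j
    simp [Matrix.gram_apply, hv.inner_eq, Matrix.mul_apply, Matrix.one_apply]
  rw [h_gram, Matrix.det_smul, Matrix.det_one_add_replicateCol_mul_replicateRow]
  simp [add_comm]

theorem IsRegularCorner.inner_linearCombination (hv : IsRegularCorner v a) (i : ι) (c : ι → ℝ) :
    ⟪v i, Fintype.linearCombination ℝ v c⟫ = a ^ 2 / 2 * (c i + ∑ j, c j) := by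
  classical
  simp only [Fintype.linearCombination_apply, inner_sum, real_inner_smul_right, hv.inner_eq,
    mul_left_comm _ (a ^ 2 / 2)]
  simp [← Finset.mul_sum, mul_add, Finset.sum_add_distrib]

theorem IsRegularCorner.norm_linearCombination_sq (hv : IsRegularCorner v a) (c : ι → ℝ) :
    ‖Fintype.linearCombination ℝ v c‖ ^ 2 = a ^ 2 / 2 * (∑ i, c i ^ 2 + (∑ i, c i) ^ 2) := by
  rw [← real_inner_self_eq_norm_sq]
  nth_rw 1 [Fintype.linearCombination_apply]
  simp only [sum_inner, real_inner_smul_left, hv.inner_linearCombination]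
  rw [sq (∑ i, c i), Finset.sum_mul, ← Finset.sum_add_distrib, Finset.mul_sum]
  exact Finset.sum_congr rfl fun i _ ↦ by ring

theorem IsRegularCorner.sum_le_one (hv : IsRegularCorner v a) (ha : a ≠ 0) {r : ℝ}
    (hr : 2 * r ^ 2 ≤ a ^ 2) {c : ι → ℝ}
    (hc : ‖Fintype.linearCombination ℝ v c‖ ≤ r) : ∑ i, c i ≤ 1 := by
  have h_sq : a ^ 2 * (∑ i, c i) ^ 2 ≤ a ^ 2 * 1 :=
    calc a ^ 2 * (∑ i, c i) ^ 2 ≤ a ^ 2 * (∑ i, c i ^ 2 + (∑ i, c i) ^ 2) := by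
          gcongr
          exact le_add_of_nonneg_left (Finset.sum_nonneg fun i _ ↦ sq_nonneg (c i))
      _ = 2 * ‖Fintype.linearCombination ℝ v c‖ ^ 2 := by
          rw [hv.norm_linearCombination_sq]
          ring
      _ ≤ 2 * r ^ 2 := by gcongr
      _ ≤ a ^ 2 * 1 := by rwa [mul_one]
  exact le_of_abs_le ((sq_le_one_iff_abs_le_one _).1 (le_of_mul_le_mul_left h_sq (by positivity)))

/-- For a regular simplex with vertices `0` and `v i`, the inward normal to the facet that contains
`0` but not `v i`, scaled so that no division is needed. -/
def inwardNormal (v : ι → V) (i : ι) : V := ((Fintype.card ι : ℝ) + 1) • v i - ∑ j, v j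

theorem IsRegularCorner.inner_inwardNormal_linearCombination (hv : IsRegularCorner v a) (i : ι)
    (c : ι → ℝ) : ⟪inwardNormal v i, Fintype.linearCombination ℝ v c⟫ =
      (Fintype.card ι + 1) * (a ^ 2 / 2) * c i := by
  simp only [inwardNormal, inner_sub_left, real_inner_smul_left, sum_inner,
    hv.inner_linearCombination, ← Finset.mul_sum, Finset.sum_add_distrib, Finset.sum_const,
    Finset.card_univ, nsmul_eq_mul]
  ring

theorem IsRegularCorner.inner_inwardNormal [DecidableEq ι] (hv : IsRegularCorner v a) (i j : ι) :
    ⟪inwardNormal v i, inwardNormal v j⟫ =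
      (Fintype.card ι + 1) * (a ^ 2 / 2) *
        ((Fintype.card ι + 1) * (if i = j then 1 else 0) - 1) := by
  have h_normal : inwardNormal v j = Fintype.linearCombination ℝ v
      (((Fintype.card ι : ℝ) + 1) • Pi.single j 1 - 1) := by
    rw [map_sub, map_smul, Fintype.linearCombination_apply_single, one_smul]
    simp [inwardNormal, Fintype.linearCombination_apply]
  rw [h_normal, hv.inner_inwardNormal_linearCombination]
  simp [Pi.single_apply]

theorem IsRegularCorner.norm_inwardNormal_sq (hv : IsRegularCorner v a) (i : ι) :
    ‖inwardNormal v i‖ ^ 2 = (Fintype.card ι + 1) * (a ^ 2 / 2) * Fintype.card ι := by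
  classical
  rw [← real_inner_self_eq_norm_sq, hv.inner_inwardNormal, if_pos rfl, mul_one,
    add_sub_cancel_right]

theorem IsRegularCorner.inwardNormal_ne_zero (hv : IsRegularCorner v a) (ha : a ≠ 0) (i : ι) :
    inwardNormal v i ≠ 0 := by
  have h_card : 0 < Fintype.card ι := Fintype.card_pos_iff.2 ⟨i⟩
  rw [← norm_ne_zero_iff, ← sq_pos_iff, hv.norm_inwardNormal_sq]
  positivity

theorem IsRegularCorner.angle_inwardNormal (hv : IsRegularCorner v a) (ha : a ≠ 0) {i j : ι}
    (hij : i ≠ j) :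
    angle (inwardNormal v i) (inwardNormal v j) = arccos (-1 / Fintype.card ι) := by
  classical
  have h_norm : ‖inwardNormal v j‖ = ‖inwardNormal v i‖ := by
    rw [← sq_eq_sq₀ (norm_nonneg _) (norm_nonneg _), hv.norm_inwardNormal_sq,
      hv.norm_inwardNormal_sq]
  rw [angle, hv.inner_inwardNormal, if_neg hij, h_norm, ← sq, hv.norm_inwardNormal_sq, mul_zero,
    zero_sub, mul_div_mul_left _ _ (by positivity)]

theorem IsRegularCorner.linearCombination_injective (hv : IsRegularCorner v a) (ha : a ≠ 0) :
    Function.Injective (Fintype.linearCombination ℝ v) := by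
  refine (injective_iff_map_eq_zero _).2 fun c hc ↦ funext fun i ↦ ?_
  have h_inner := hv.inner_inwardNormal_linearCombination i c
  rw [hc, inner_zero_right, eq_comm] at h_inner
  exact (mul_eq_zero_iff_left (by positivity)).1 h_inner

variable [FiniteDimensional ℝ V]

theorem IsRegularCorner.linearCombination_surjective (hv : IsRegularCorner v a) (ha : a ≠ 0)
    (h_dim : finrank ℝ V = Fintype.card ι) :
    Function.Surjective (Fintype.linearCombination ℝ v) :=
  (LinearMap.injective_iff_surjective_of_finrank_eq_finrank
    ((finrank_fintype_fun_eq_card ℝ).trans h_dim.symm)).1 (hv.linearCombination_injective ha)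

theorem IsRegularCorner.image_cornerSimplex_inter_closedBall {n : ℕ} {v : Fin n → V}
    (hv : IsRegularCorner v a) (ha : a ≠ 0) (h_dim : finrank ℝ V = n) {r : ℝ}
    (hr : 2 * r ^ 2 ≤ a ^ 2) :
    Fintype.linearCombination ℝ v '' cornerSimplex n 1 ∩ closedBall 0 r =
      (⋂ i, {x | 0 ≤ ⟪inwardNormal v i, x⟫}) ∩ closedBall 0 r := by
  have h_nonneg_iff (c : Fin n → ℝ) (i : Fin n) :
      0 ≤ ⟪inwardNormal v i, Fintype.linearCombination ℝ v c⟫ ↔ 0 ≤ c i := by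
    rw [hv.inner_inwardNormal_linearCombination, mul_nonneg_iff_of_pos_left (by positivity)]
  ext x
  simp only [mem_inter_iff, mem_iInter, mem_ofPred_eq, mem_closedBall_zero_iff, and_congr_left_iff]
  intro hx
  constructor
  · rintro ⟨c, hc, rfl⟩ i
    exact (h_nonneg_iff c i).2 (hc.1 i)
  · obtain ⟨c, rfl⟩ := hv.linearCombination_surjective ha (by rwa [Fintype.card_fin]) x
    exact fun h ↦ ⟨c, ⟨fun i ↦ (h_nonneg_iff c i).1 (h i), hv.sum_le_one ha hr hx⟩, rfl⟩

end RegularCorner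

section RegularSimplex

open scoped Nat

variable {V : Type*} [NormedAddCommGroup V] [InnerProductSpace ℝ V] [FiniteDimensional ℝ V]
  [MeasurableSpace V] [BorelSpace V] {a : ℝ}

theorem volume_real_convexHull_range_of_pairwise_dist_eq {n : ℕ} (h_dim : finrank ℝ V = n)
    {p : Fin (n + 1) → V} (hp : Pairwise fun i j ↦ dist (p i) (p j) = a) :
    volume.real (convexHull ℝ (range p)) = √((a ^ 2 / 2) ^ n * (n + 1)) / n ! := by
  rw [volume_real_convexHull_range h_dim, (isRegularCorner_of_pairwise_dist_eq hp).det_gram,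
    Fintype.card_fin]

theorem volume_real_convexHull_range_of_pairwise_dist_eq_two (h_dim : finrank ℝ V = 3)
    {p : Fin 4 → V} (hp : Pairwise fun i j ↦ dist (p i) (p j) = 2) :
    volume.real (convexHull ℝ (range p)) = 2 * √2 / 3 := by
  have h_sqrt : √((2 ^ 2 / 2) ^ 3 * ((3 : ℕ) + 1)) = 4 * √2 := by
    rw [show (2 ^ 2 / 2 : ℝ) ^ 3 * ((3 : ℕ) + 1) = 4 ^ 2 * 2 by norm_num,
      Real.sqrt_mul (by norm_num), Real.sqrt_sq (by norm_num)]
  rw [volume_real_convexHull_range_of_pairwise_dist_eq h_dim hp, h_sqrt]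
  simp only [Nat.factorial, Nat.succ_eq_add_one, Nat.reduceAdd, zero_add, mul_one, Nat.reduceMul,
    Nat.cast_ofNat]
  ring

theorem volume_real_convexHull_range_inter_closedBall_zero {n : ℕ} (h_dim : finrank ℝ V = n)
    {p : Fin (n + 1) → V} (ha : a ≠ 0) (hp : Pairwise fun i j ↦ dist (p i) (p j) = a) {r : ℝ}
    (hr : 2 * r ^ 2 ≤ a ^ 2) :
    volume.real (convexHull ℝ (range p) ∩ closedBall (p 0) r) =
      volume.real ((⋂ i, openHalfSpace (inwardNormal (fun i : Fin n ↦ p i.succ - p 0) i)) ∩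
        closedBall 0 r) := by
  have hv := isRegularCorner_of_pairwise_dist_eq hp
  have h_ball : closedBall (p 0) r = (p 0 + ·) '' closedBall 0 r := by simp
  rw [convexHull_range_eq_image_cornerSimplex, h_ball, ← image_inter (add_right_injective _),
    measureReal_def, image_add_left, measure_preimage_add,
    hv.image_cornerSimplex_inter_closedBall ha h_dim hr, ← measureReal_def]
  refine measureReal_congr (Filter.EventuallyEq.inter ?_ .rfl)
  exact (Filter.EventuallyEq.countable_iInter fun i ↦
    openHalfSpace_ae_eq (hv.inwardNormal_ne_zero ha i)).symm

theorem volume_real_tetrahedron_inter_closedBall_zero (h_dim : finrank ℝ V = 3) {p : Fin 4 → V}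
    (ha : a ≠ 0) (hp : Pairwise fun i j ↦ dist (p i) (p j) = a) {r : ℝ}
    (hr : 2 * r ^ 2 ≤ a ^ 2) :
    volume.real (convexHull ℝ (range p) ∩ closedBall (p 0) r) =
      (3 * arccos (1 / 3) - π) / (4 * π) * volume.real (closedBall (0 : V) r) := by
  have hv := isRegularCorner_of_pairwise_dist_eq hp
  have h_angle {i j : Fin 3} (hij : i ≠ j) := hv.angle_inwardNormal ha hij
  have h_ne := hv.inwardNormal_ne_zero ha
  simp only [Fintype.card_fin, Nat.cast_ofNat, neg_div, arccos_neg] at h_angle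
  rw [volume_real_convexHull_range_inter_closedBall_zero h_dim ha hp hr]
  generalize inwardNormal (fun i : Fin 3 ↦ p i.succ - p 0) = N at *
  have h_iInter : ⋂ i, openHalfSpace (N i) = openHalfSpace (N 0) ∩ openHalfSpace (N 1) ∩
      openHalfSpace (N 2) := by
    ext x
    simp [Fin.forall_fin_succ, and_assoc]
  rw [h_iInter, volume_real_openHalfSpace_inter_inter_inter_closedBall (by omega) (h_ne 0) (h_ne 1)
    (h_ne 2), h_angle (by decide), h_angle (by decide), h_angle (by decide)]
  ring

theorem volume_real_tetrahedron_inter_closedBall (h_dim : finrank ℝ V = 3) {p : Fin 4 → V}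
    (ha : a ≠ 0) (hp : Pairwise fun i j ↦ dist (p i) (p j) = a) {r : ℝ}
    (hr : 2 * r ^ 2 ≤ a ^ 2) (i : Fin 4) :
    volume.real (convexHull ℝ (range p) ∩ closedBall (p i) r) =
      (3 * arccos (1 / 3) - π) / (4 * π) * volume.real (closedBall (0 : V) r) := by
  have hp_swap : Pairwise fun j k ↦ dist (p (Equiv.swap 0 i j)) (p (Equiv.swap 0 i k)) = a :=
    fun j k hjk ↦ hp ((Equiv.swap 0 i).injective.ne hjk)
  have h_range : range (fun j ↦ p (Equiv.swap 0 i j)) = range p :=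
    (Equiv.swap 0 i).surjective.range_comp p
  have h_zero := volume_real_tetrahedron_inter_closedBall_zero h_dim ha hp_swap hr
  rwa [h_range, Equiv.swap_apply_left] at h_zero

theorem volume_real_tetrahedron_inter_iUnion_closedBall (h_dim : finrank ℝ V = 3) {p : Fin 4 → V}
    (hp : Pairwise fun i j ↦ dist (p i) (p j) = a) {r : ℝ} (hr_pos : 0 < r) (hr : 2 * r ≤ a) :
    volume.real (convexHull ℝ (range p) ∩ ⋃ i, closedBall (p i) r) =
      (3 * arccos (1 / 3) - π) / π * volume.real (closedBall (0 : V) r) := by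
  have ha : a ≠ 0 := by linarith
  have h_corner := volume_real_tetrahedron_inter_closedBall h_dim ha hp (r := r) (by nlinarith)
  have h_measurable (i : Fin 4) : MeasurableSet (convexHull ℝ (range p) ∩ closedBall (p i) r) :=
    ((finite_range p).isCompact_convexHull (𝕜 := ℝ)).measurableSet.inter measurableSet_closedBall
  have h_disjoint : Pairwise
      (Function.onFun (AEDisjoint volume) fun i ↦ convexHull ℝ (range p) ∩ closedBall (p i) r) :=
    fun i j hij ↦ (aedisjoint_closedBall_closedBall hr_pos.ne' (by linarith [hp hij])).mono
      inter_subset_right inter_subset_right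
  rw [inter_iUnion, measureReal_def, measure_iUnion₀ h_disjoint
    fun i ↦ (h_measurable i).nullMeasurableSet, tsum_fintype, ENNReal.toReal_sum]
  · simp only [← measureReal_def, h_corner, Finset.sum_const, Finset.card_univ, Fintype.card_fin]
    ring
  · exact fun i _ ↦ measure_ne_top_of_subset inter_subset_right measure_closedBall_lt_top.ne

theorem volume_real_tetrahedron_inter_iUnion_closedBall_one {p : Fin 4 → E3}
    (hp : Pairwise fun i j ↦ dist (p i) (p j) = 2) :
    volume.real (convexHull ℝ (range p) ∩ ⋃ i, closedBall (p i) 1) =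
      4 / 3 * (3 * arccos (1 / 3) - π) := by
  have h_ball : volume.real (closedBall (0 : E3) 1) = 4 / 3 * π := by
    rw [measureReal_def, EuclideanSpace.volume_closedBall_fin_three]
    simp only [ENNReal.ofReal_one, one_pow, one_mul,
      ENNReal.toReal_ofReal (show 0 ≤ π * 4 / 3 by positivity)]
    ring
  rw [volume_real_tetrahedron_inter_iUnion_closedBall finrank_euclideanSpace_fin hp one_pos
    (by norm_num), h_ball]
  field_simp

end RegularSimplex

section Compression

theorem two_mul_arccos_one_div_sqrt_three : 2 * arccos (1 / √3) = π - arccos (1 / 3) := by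
  have h_le : 1 / √3 ≤ 1 := (div_le_one (by positivity)).2 (Real.one_le_sqrt.2 (by norm_num))
  have h_half : arccos (1 / √3) ≤ π / 2 := arccos_le_pi_div_two.2 (by positivity)
  rw [← arccos_neg, ← arccos_cos (x := 2 * arccos (1 / √3))
    (by linarith [arccos_nonneg (1 / √3)]) (by linarith), cos_two_mul,
    cos_arccos (by linarith [show 0 ≤ 1 / √3 by positivity]) h_le, div_pow,
    Real.sq_sqrt (by norm_num)]
  norm_num

theorem regular_compression_eq :
    (4 / 3) * (3 * arccos (1 / 3) - π) - δoct * (2 * √2 / 3) =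
      2 * (3 * arccos (1 / 3) - 7 * π / 6) := by
  have h_sqrt : √8 = 2 * √2 := by
    rw [show (8 : ℝ) = 2 ^ 2 * 2 by norm_num, Real.sqrt_mul (by norm_num),
      Real.sqrt_sq (by norm_num)]
  have h_oct : δoct * (2 * √2 / 3) = (-3 * π + 6 * (2 * arccos (1 / √3))) / 3 := by
    rw [δoct, h_sqrt]
    field_simp
    ring
  rw [h_oct, two_mul_arccos_one_div_sqrt_three]
  ring

theorem sin_three_mul_arccos_one_third_sub :
    sin (3 * arccos (1 / 3) - 7 * π / 6) = (10 * √6 - 23) / 54 := by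
  have h_cos : cos (arccos (1 / 3)) = 1 / 3 := cos_arccos (by norm_num) (by norm_num)
  have h_sin : sin (arccos (1 / 3)) = 2 * √2 / 3 := by
    rw [sin_arccos, show (1 - (1 / 3) ^ 2 : ℝ) = (2 / 3) ^ 2 * 2 by norm_num,
      Real.sqrt_mul (by norm_num), Real.sqrt_sq (by norm_num)]
    ring
  have h_sqrt : √6 = √2 * √3 := by rw [← Real.sqrt_mul (by norm_num)]; norm_num
  have h_sq : √2 ^ 2 = 2 := Real.sq_sqrt (by norm_num)
  rw [show 7 * π / 6 = π / 6 + π by ring, sin_sub, cos_add_pi, sin_add_pi, cos_pi_div_six,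
    sin_pi_div_six, sin_three_mul, cos_three_mul, h_cos, h_sin, h_sqrt]
  linear_combination (16 / 27 * (√2 * √3)) * h_sq

theorem three_mul_arccos_one_third_sub_mem_Icc :
    3 * arccos (1 / 3) - 7 * π / 6 ∈ Set.Icc (-(π / 2)) (π / 2) := by
  have h_lower : π / 3 ≤ arccos (1 / 3) := by
    rw [← arccos_cos (x := π / 3) (by positivity) (by linarith [pi_pos]), cos_pi_div_three]
    exact arccos_le_arccos (by norm_num)
  have h_upper : arccos (1 / 3) ≤ π / 2 := arccos_le_pi_div_two.2 (by norm_num)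
  constructor <;> linarith [pi_pos]

theorem regular_compression_bounds :
    0.0553 < (4 / 3) * (3 * arccos (1 / 3) - π) - δoct * (2 * √2 / 3) ∧
      (4 / 3) * (3 * arccos (1 / 3) - π) - δoct * (2 * √2 / 3) < 0.0554 := by
  have h_sqrt_lower : 2.4494 < √6 := Real.lt_sqrt_of_sq_lt (by norm_num)
  have h_sqrt_upper : √6 < 2.4495 := (Real.sqrt_lt' (by norm_num)).2 (by norm_num)
  have h_mem := three_mul_arccos_one_third_sub_mem_Icc
  have h_sin := sin_three_mul_arccos_one_third_sub
  have h_lower : 0.02765 < 3 * arccos (1 / 3) - 7 * π / 6 := by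
    rw [← strictMonoOn_sin.lt_iff_lt ⟨by linarith [pi_pos], by linarith [pi_gt_three]⟩ h_mem, h_sin]
    linarith [sin_lt (x := 0.02765) (by norm_num)]
  have h_upper : 3 * arccos (1 / 3) - 7 * π / 6 < 0.0277 := by
    rw [← strictMonoOn_sin.lt_iff_lt h_mem ⟨by linarith [pi_pos], by linarith [pi_gt_three]⟩, h_sin]
    linarith [sin_gt_sub_cube (x := 0.0277) (by norm_num)]
  rw [regular_compression_eq]
  constructor <;> linarith

end Compression

/-- The regular tetrahedron of edge `2` has volume `2√2/3`, contains a total ball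
volume of `(4/3)(3·arccos(1/3) - π)`, and its compression is
`1 pt = (4/3)(3·arccos(1/3) - π) - δ_oct·(2√2/3) ∈ (0.0553, 0.0554)`. -/
theorem regular_tetrahedron_compression (p₀ p₁ p₂ p₃ : E3)
    (h01 : dist p₀ p₁ = 2) (h02 : dist p₀ p₂ = 2) (h03 : dist p₀ p₃ = 2)
    (h12 : dist p₁ p₂ = 2) (h13 : dist p₁ p₃ = 2) (h23 : dist p₂ p₃ = 2) :
    (volume (convexHull ℝ ({p₀, p₁, p₂, p₃} : Set E3))).toReal = 2 * Real.sqrt 2 / 3 ∧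
    (volume (convexHull ℝ ({p₀, p₁, p₂, p₃} : Set E3) ∩
        (Metric.closedBall p₀ 1 ∪ Metric.closedBall p₁ 1 ∪ Metric.closedBall p₂ 1 ∪
          Metric.closedBall p₃ 1))).toReal = (4 / 3) * (3 * arccos (1 / 3) - π) ∧
    Gamma p₀ p₁ p₂ p₃ = (4 / 3) * (3 * arccos (1 / 3) - π) - δoct * (2 * Real.sqrt 2 / 3) ∧
    0.0553 < (4 / 3) * (3 * arccos (1 / 3) - π) - δoct * (2 * Real.sqrt 2 / 3) ∧
    (4 / 3) * (3 * arccos (1 / 3) - π) - δoct * (2 * Real.sqrt 2 / 3) < 0.0554 := by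
  let p : Fin 4 → E3 := ![p₀, p₁, p₂, p₃]
  have h_dim : finrank ℝ E3 = 3 := finrank_euclideanSpace_fin
  have hp : Pairwise fun i j ↦ dist (p i) (p j) = 2 := by
    intro i j hij
    fin_cases i <;> fin_cases j <;> simp_all [p, dist_comm]
  have h_range : range p = {p₀, p₁, p₂, p₃} := by
    simp only [p, Matrix.range_cons, Matrix.range_empty, union_empty, insert_eq]
  have h_balls : ⋃ i, closedBall (p i) 1 =
      closedBall p₀ 1 ∪ closedBall p₁ 1 ∪ closedBall p₂ 1 ∪ closedBall p₃ 1 := by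
    ext x
    simp [p, Fin.exists_fin_succ, or_assoc]
  have h_volume := volume_real_convexHull_range_of_pairwise_dist_eq_two h_dim hp
  have h_inter := volume_real_tetrahedron_inter_iUnion_closedBall_one hp
  rw [h_range] at h_volume h_inter
  rw [h_balls] at h_inter
  refine ⟨h_volume, h_inter, ?_, regular_compression_bounds⟩
  rw [_root_.Gamma, ← measureReal_def, ← measureReal_def, h_volume, h_inter]
  ring
end
end

section
/- Let p₀,p₁,p₂,p₃ ∈ ℝ³ span a small simplex S with edge lengths y₁ = |p₀−p₁|, y₂ = |p₀−p₂|, y₃ = |p₀−p₃|, y₄ = |p₂−p₃|, y₅ = |p₁−p₃|, y₆ = |p₁−p₂| satisfying y₁, y₄ ∈ [2√2 − 0.01, 2√2] and y₂, y₃, y₅, y₆ ∈ [2, 2.01] (i.e., all edge lengths lie within 0.01 of those of S₁ = S(2√2,2,2,2√2,2,2)). Then Γ(S) ≤ 0, with equality if and only if y₁ = y₄ = 2√2 and y₂ = y₃ = y₅ = y₆ = 2. -/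
open MeasureTheory Real

noncomputable section

/-- The circumradius `η(a,b,c)` of a triangle with side lengths `a`, `b`, `c`. -/
def eta (a b c : ℝ) : ℝ :=
  a * b * c / Real.sqrt ((a + b + c) * (b + c - a) * (a + c - b) * (a + b - c))

/-- A simplex is small if all six edge lengths are at least `2` and each of the
four triangular faces has circumradius at most `√2`. -/
def IsSmall (p₀ p₁ p₂ p₃ : E3) : Prop :=
  (2 ≤ dist p₀ p₁ ∧ 2 ≤ dist p₀ p₂ ∧ 2 ≤ dist p₀ p₃ ∧
    2 ≤ dist p₁ p₂ ∧ 2 ≤ dist p₁ p₃ ∧ 2 ≤ dist p₂ p₃) ∧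
  eta (dist p₀ p₁) (dist p₀ p₂) (dist p₁ p₂) ≤ Real.sqrt 2 ∧
  eta (dist p₀ p₁) (dist p₀ p₃) (dist p₁ p₃) ≤ Real.sqrt 2 ∧
  eta (dist p₀ p₂) (dist p₀ p₃) (dist p₂ p₃) ≤ Real.sqrt 2 ∧
  eta (dist p₁ p₂) (dist p₁ p₃) (dist p₂ p₃) ≤ Real.sqrt 2

/-!
Let `p` be an endpoint of a long edge of `S` and `u` the unit vector along that edge. The unit ball
at `p` lies in the half-space `⟨u, x - p⟩ ≤ 1`, and stretching every edge `q - p` at `p` by the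
factor `⟨u, q - p⟩` maps the part of `S` in that half-space into `S`. So the ball covers at most
`vol S / ∏ ⟨u, q - p⟩` of `S`. For `S` near `S₁` the two balls at the ends of a long edge of length
`y` together cover about `8 / y³ · vol S`, and all four balls cover about `vol S / √2`, in any case
at most `0.716 vol S`. As `0.716 < δ_oct`, this gives `Γ(S) ≤ 0` with equality iff `vol S = 0`.

It remains to find the flat `S`. An affine dependence `w` of `n` points with mutual distances `dᵢⱼ`
satisfies
`∑_{i ≠ j} ((dᵢⱼ² - a) (wᵢ - wⱼ)² + (b - dᵢⱼ²) (wᵢ + wⱼ)²) = 2 (n (b - a) - 2 b) ∑ wᵢ²`.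
For `n = 4` and `b = 2 a` the right-hand side vanishes, so if all `dᵢⱼ²` lie in `[a, 2 a]`, every
term on the left vanishes and the four points form a square.
-/

section TruncatedSimplex

open Module

theorem det_constr_smul {ι R M : Type*} [Fintype ι] [CommRing R] [AddCommGroup M] [Module R M]
    (b : Basis ι R M) (c : ι → R) :
    LinearMap.det (b.constr R fun i ↦ c i • b i) = ∏ i, c i := by
  classical
  have hdiag : LinearMap.toMatrix b b (b.constr R fun i ↦ c i • b i) = Matrix.diagonal c := by
    ext i j
    rw [LinearMap.toMatrix_apply, b.constr_basis, map_smul, b.repr_self, Finsupp.smul_single,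
      Finsupp.single_apply, Matrix.diagonal_apply, smul_eq_mul, mul_one]
    grind
  rw [← LinearMap.det_toMatrix b, hdiag, Matrix.det_diagonal]

section Algebra

variable {ι k V : Type*} [CommRing k] [AddCommGroup V] [Module k V]

/-- The linear map stretching each edge `b j - b i` of an affine basis at the vertex `b i` by the
factor `f (b j - b i)`. -/
def edgeScaling (b : AffineBasis ι k V) (i : ι) (f : V →ₗ[k] k) : V →ₗ[k] V :=
  (b.basisOf i).constr k fun j ↦ f (b j - b i) • b.basisOf i j

theorem edgeScaling_sub (b : AffineBasis ι k V) (i j : ι) (f : V →ₗ[k] k) :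
    edgeScaling b i f (b j - b i) = f (b j - b i) • (b j - b i) := by
  rcases eq_or_ne j i with rfl | hj
  · simp only [sub_self, map_zero, zero_smul]
  · simpa only [edgeScaling, b.basisOf_apply, vsub_eq_sub] using
      (b.basisOf i).constr_basis k (fun j ↦ f (b j - b i) • b.basisOf i j) ⟨j, hj⟩

theorem det_edgeScaling [Fintype ι] [DecidableEq ι] (b : AffineBasis ι k V) (i : ι)
    (f : V →ₗ[k] k) :
    LinearMap.det (edgeScaling b i f) = ∏ j ∈ Finset.univ.erase i, f (b j - b i) := by
  rw [edgeScaling, det_constr_smul]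
  exact (Finset.prod_subtype _ (by simp) fun j ↦ f (b j - b i)).symm

theorem coord_linear_sub (b : AffineBasis ι k V) (j : ι) (x y : V) :
    (b.coord j).linear (x - y) = b.coord j x - b.coord j y :=
  (b.coord j).linearMap_vsub x y

theorem coord_linear_edgeScaling_self (b : AffineBasis ι k V) (i : ι) (f : V →ₗ[k] k) (v : V) :
    (b.coord i).linear (edgeScaling b i f v) = -f v := by
  have : (b.coord i).linear ∘ₗ edgeScaling b i f = -f := (b.basisOf i).ext fun l ↦ by
    rw [LinearMap.comp_apply, LinearMap.neg_apply, b.basisOf_apply, vsub_eq_sub, edgeScaling_sub,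
      map_smul, coord_linear_sub, b.coord_apply_eq, b.coord_apply_ne l.2.symm, zero_sub, smul_neg,
      smul_eq_mul, mul_one]
  exact LinearMap.congr_fun this v

theorem coord_linear_edgeScaling_of_ne (b : AffineBasis ι k V) {i j : ι} (hj : j ≠ i)
    (f : V →ₗ[k] k) (v : V) :
    (b.coord j).linear (edgeScaling b i f v) = f (b j - b i) * (b.coord j).linear v := by
  have : (b.coord j).linear ∘ₗ edgeScaling b i f = f (b j - b i) • (b.coord j).linear :=
    (b.basisOf i).ext fun l ↦ by
      rw [LinearMap.comp_apply, LinearMap.smul_apply, b.basisOf_apply, vsub_eq_sub,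
        edgeScaling_sub, map_smul]
      rcases eq_or_ne j l with rfl | hjl
      · rfl
      · simp only [coord_linear_sub, b.coord_apply_ne hjl, b.coord_apply_ne hj, sub_self, smul_zero]
  exact LinearMap.congr_fun this v

-- In barycentric coordinates `edgeScaling` turns the bounding hyperplane `f (x - b i) = 1` into the
-- face opposite to `b i`.
theorem convexHull_inter_halfSpace_subset_preimage {𝕜 : Type*} [Field 𝕜] [LinearOrder 𝕜]
    [IsStrictOrderedRing 𝕜] [Module 𝕜 V] (b : AffineBasis ι 𝕜 V) (i : ι)
    {f : V →ₗ[𝕜] 𝕜} (hf : ∀ j ≠ i, 0 ≤ f (b j - b i)) :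
    convexHull 𝕜 (Set.range b) ∩ {x | f (x - b i) ≤ 1} ⊆
      (fun x ↦ b i + edgeScaling b i f (x - b i)) ⁻¹' convexHull 𝕜 (Set.range b) := by
  have hcoord : ∀ j v, b.coord j (b i + v) = b.coord j (b i) + (b.coord j).linear v :=
    fun j v ↦ by rw [add_comm, ← vadd_eq_add, AffineMap.map_vadd, vadd_eq_add, add_comm]
  rintro x ⟨hx, hfx⟩
  rw [b.convexHull_eq_nonneg_coord] at hx
  rw [Set.mem_preimage, b.convexHull_eq_nonneg_coord]
  intro j
  rcases eq_or_ne j i with rfl | hj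
  · rw [hcoord, coord_linear_edgeScaling_self, b.coord_apply_eq, ← sub_eq_add_neg]
    exact sub_nonneg.2 hfx
  · rw [hcoord, coord_linear_edgeScaling_of_ne b hj, coord_linear_sub, b.coord_apply_ne hj,
      zero_add, sub_zero]
    exact mul_nonneg (hf j hj) (hx j)

end Algebra

section Measure

theorem measure_convexHull_ne_top {V : Type*} [NormedAddCommGroup V] [NormedSpace ℝ V]
    [MeasurableSpace V] (μ : Measure V) [IsFiniteMeasureOnCompacts μ] {s : Set V}
    (hs : s.Finite) : μ (convexHull ℝ s) ≠ ⊤ :=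
  (hs.isCompact_convexHull ℝ).measure_ne_top

variable {ι V : Type*} [NormedAddCommGroup V] [NormedSpace ℝ V] [FiniteDimensional ℝ V]
  [MeasurableSpace V] [BorelSpace V] (μ : Measure V) [μ.IsAddHaarMeasure]

theorem measure_preimage_add_linearMap_sub {L : V →ₗ[ℝ] V} (hL : LinearMap.det L ≠ 0) (c : V)
    (s : Set V) :
    μ ((fun x ↦ c + L (x - c)) ⁻¹' s) = ENNReal.ofReal |(LinearMap.det L)⁻¹| * μ s := by
  have hcomp : (fun x ↦ c + L (x - c)) ⁻¹' s = (· + -c) ⁻¹' (L ⁻¹' ((c + ·) ⁻¹' s)) := by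
    simp only [sub_eq_add_neg]; rfl
  rw [hcomp, measure_preimage_add_right, Measure.addHaar_preimage_linearMap μ hL,
    measure_preimage_add]

variable [Fintype ι]

theorem measureReal_convexHull_inter_halfSpace_le [DecidableEq ι] (b : AffineBasis ι ℝ V) (i : ι)
    {f : V →ₗ[ℝ] ℝ} (hf : ∀ j ≠ i, 0 < f (b j - b i)) :
    μ.real (convexHull ℝ (Set.range b) ∩ {x | f (x - b i) ≤ 1}) ≤
      (∏ j ∈ Finset.univ.erase i, f (b j - b i))⁻¹ * μ.real (convexHull ℝ (Set.range b)) := by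
  have hpos : 0 < ∏ j ∈ Finset.univ.erase i, f (b j - b i) :=
    Finset.prod_pos fun j hj ↦ hf j (Finset.ne_of_mem_erase hj)
  have hdet := det_edgeScaling b i f
  have hmeasure : μ ((fun x ↦ b i + edgeScaling b i f (x - b i)) ⁻¹' convexHull ℝ (Set.range b)) =
      ENNReal.ofReal (∏ j ∈ Finset.univ.erase i, f (b j - b i))⁻¹ *
        μ (convexHull ℝ (Set.range b)) := by
    rw [measure_preimage_add_linearMap_sub μ (hdet ▸ hpos.ne'), hdet,
      abs_of_pos (inv_pos.2 hpos)]
  have hfin : μ (convexHull ℝ (Set.range b)) ≠ ⊤ :=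
    measure_convexHull_ne_top μ (Set.finite_range b)
  refine (measureReal_mono (convexHull_inter_halfSpace_subset_preimage b i
    fun j hj ↦ (hf j hj).le) (hmeasure ▸ ENNReal.mul_ne_top ENNReal.ofReal_ne_top hfin)).trans_eq ?_
  rw [measureReal_def, hmeasure, ENNReal.toReal_mul, ENNReal.toReal_ofReal (inv_pos.2 hpos).le,
    measureReal_def]

theorem measure_convexHull_eq_zero_iff (s : Set V) :
    μ (convexHull ℝ s) = 0 ↔ affineSpan ℝ s ≠ ⊤ := by
  refine ⟨fun h hs ↦ ?_, fun hs ↦ measure_mono_null (convexHull_subset_affineSpan s)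
    (Measure.addHaar_affineSubspace μ _ hs)⟩
  exact (Measure.measure_pos_of_nonempty_interior μ
    (interior_convexHull_nonempty_iff_affineSpan_eq_top.2 hs)).ne' h

end Measure

section Simplex

variable {ι V : Type*} [Fintype ι] [NormedAddCommGroup V]

theorem affineIndependent_iff_affineSpan_eq_top [NormedSpace ℝ V] [FiniteDimensional ℝ V]
    {p : ι → V} (hcard : Fintype.card ι = finrank ℝ V + 1) :
    AffineIndependent ℝ p ↔ affineSpan ℝ (Set.range p) = ⊤ := by
  have : Nonempty ι := Fintype.card_pos_iff.1 (by omega)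
  rw [affineIndependent_iff_finrank_vectorSpan_eq ℝ p hcard,
    AffineSubspace.affineSpan_eq_top_iff_vectorSpan_eq_top_of_nonempty _ _ _ (Set.range_nonempty p)]
  exact ⟨Submodule.eq_top_of_finrank_eq, fun h ↦ by rw [h, finrank_top]⟩

variable [MeasurableSpace V] [BorelSpace V] (μ : Measure V) [μ.IsAddHaarMeasure]

theorem measureReal_convexHull_range_eq_zero_iff [NormedSpace ℝ V] [FiniteDimensional ℝ V]
    {p : ι → V} (hcard : Fintype.card ι = finrank ℝ V + 1) :
    μ.real (convexHull ℝ (Set.range p)) = 0 ↔ ¬ AffineIndependent ℝ p := by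
  have hfin : μ (convexHull ℝ (Set.range p)) ≠ ⊤ :=
    measure_convexHull_ne_top μ (Set.finite_range p)
  rw [measureReal_eq_zero_iff hfin, measure_convexHull_eq_zero_iff,
    affineIndependent_iff_affineSpan_eq_top hcard]

theorem measureReal_convexHull_inter_closedBall_le [DecidableEq ι] [InnerProductSpace ℝ V]
    [FiniteDimensional ℝ V] {p : ι → V} (hcard : Fintype.card ι = finrank ℝ V + 1) (i : ι)
    {u : V} {r : ℝ} (hu : ‖u‖ * r ≤ 1) (hpos : ∀ j ≠ i, 0 < inner ℝ u (p j - p i)) :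
    μ.real (convexHull ℝ (Set.range p) ∩ Metric.closedBall (p i) r) ≤
      (∏ j ∈ Finset.univ.erase i, inner ℝ u (p j - p i))⁻¹ *
        μ.real (convexHull ℝ (Set.range p)) := by
  have hfin : μ (convexHull ℝ (Set.range p)) ≠ ⊤ :=
    measure_convexHull_ne_top μ (Set.finite_range p)
  by_cases hp : AffineIndependent ℝ p
  · have hball : Metric.closedBall (p i) r ⊆ {x | innerₛₗ ℝ u (x - p i) ≤ 1} := fun x hx ↦
      calc inner ℝ u (x - p i) ≤ ‖u‖ * ‖x - p i‖ := real_inner_le_norm u _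
        _ ≤ ‖u‖ * r := by gcongr; exact mem_closedBall_iff_norm.1 hx
        _ ≤ 1 := hu
    have hmono := measureReal_mono (Set.inter_subset_inter_right (convexHull ℝ (Set.range p)) hball)
      (measure_ne_top_of_subset Set.inter_subset_left hfin)
    exact hmono.trans (measureReal_convexHull_inter_halfSpace_le μ
      ⟨p, hp, (affineIndependent_iff_affineSpan_eq_top hcard).1 hp⟩ i hpos)
  · have hzero := (measureReal_convexHull_range_eq_zero_iff μ hcard).2 hp
    rw [hzero, mul_zero, ← hzero]
    exact measureReal_mono Set.inter_subset_left hfin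

end Simplex

end TruncatedSimplex

section FootParameter

variable {V : Type*} [NormedAddCommGroup V] [InnerProductSpace ℝ V]

/-- The position, in units of `q - p` and counted from `p`, of the foot of the perpendicular from
`x` to the line through `p` and `q`. It is `0` by division by zero when `p = q`. -/
def footParam (p q x : V) : ℝ := inner ℝ (q - p) (x - p) / dist p q ^ 2

theorem footParam_eq_dist (p q x : V) :
    footParam p q x = (dist p q ^ 2 + dist p x ^ 2 - dist q x ^ 2) / (2 * dist p q ^ 2) := by
  rw [footParam, real_inner_eq_norm_mul_self_add_norm_mul_self_sub_norm_sub_mul_self_div_two,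
    sub_sub_sub_cancel_right, ← dist_eq_norm, ← dist_eq_norm, ← dist_eq_norm, dist_comm q p,
    dist_comm x p, div_div]
  simp only [sq]

theorem ne_of_footParam_ne_zero {p q x : V} (hx : footParam p q x ≠ 0) : p ≠ q := by
  rintro rfl
  exact hx (by rw [footParam, sub_self, inner_zero_left, zero_div])

theorem footParam_swap {p q : V} (hpq : p ≠ q) (x : V) :
    footParam q p x = 1 - footParam p q x := by
  have := dist_ne_zero.2 hpq
  rw [footParam_eq_dist, footParam_eq_dist, dist_comm q p]
  field_simp
  ring

theorem footParam_right {p q : V} (hpq : p ≠ q) : footParam p q q = 1 := by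
  have := dist_ne_zero.2 hpq
  rw [footParam_eq_dist, dist_self]
  field_simp
  ring

theorem abs_footParam_sub_half {p q : V} (hpq : p ≠ q) (x : V) :
    |footParam p q x - 1 / 2| = |dist p x ^ 2 - dist q x ^ 2| / (2 * dist p q ^ 2) := by
  have hd := dist_pos.2 hpq
  have hdiff : footParam p q x - 1 / 2 = (dist p x ^ 2 - dist q x ^ 2) / (2 * dist p q ^ 2) := by
    rw [footParam_eq_dist]
    field_simp
    ring
  rw [hdiff, abs_div, abs_of_pos (by positivity : 0 < 2 * dist p q ^ 2)]

variable [FiniteDimensional ℝ V] [MeasurableSpace V] [BorelSpace V] (μ : Measure V)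
  [μ.IsAddHaarMeasure]

theorem measureReal_convexHull_inter_closedBall_one_le {ι : Type*} [Fintype ι] [DecidableEq ι]
    {p : ι → V} (hcard : Fintype.card ι = Module.finrank ℝ V + 1) {i k : ι} (hik : p i ≠ p k)
    (hpos : ∀ j ≠ i, 0 < footParam (p i) (p k) (p j)) :
    μ.real (convexHull ℝ (Set.range p) ∩ Metric.closedBall (p i) 1) ≤
      (∏ j ∈ Finset.univ.erase i, dist (p i) (p k) * footParam (p i) (p k) (p j))⁻¹ *
        μ.real (convexHull ℝ (Set.range p)) := by
  have hd := dist_pos.2 hik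
  have hinner : ∀ j, inner ℝ ((dist (p i) (p k))⁻¹ • (p k - p i)) (p j - p i) =
      dist (p i) (p k) * footParam (p i) (p k) (p j) := fun j ↦ by
    rw [real_inner_smul_left, footParam]
    field_simp
  have hunit : ‖(dist (p i) (p k))⁻¹ • (p k - p i)‖ * 1 ≤ 1 := by
    rw [norm_smul, ← dist_eq_norm, dist_comm (p k), norm_inv, norm_of_nonneg hd.le,
      inv_mul_cancel₀ hd.ne', mul_one]
  have hcone := measureReal_convexHull_inter_closedBall_le μ hcard i hunit
    fun j hj ↦ (hinner j).symm ▸ mul_pos hd (hpos j hj)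
  simpa only [hinner] using hcone

theorem range_vec_four {α : Type*} (a b c d : α) : Set.range ![a, b, c, d] = {a, b, c, d} := by
  simp only [Matrix.range_cons, Matrix.range_empty, Set.union_empty, Set.singleton_union]

theorem measureReal_tetrahedron_inter_closedBall_one_le (hV : Module.finrank ℝ V = 3)
    {p q x y : V} (hx : 0 < footParam p q x) (hy : 0 < footParam p q y) :
    μ.real (convexHull ℝ {p, q, x, y} ∩ Metric.closedBall p 1) ≤
      (footParam p q x * footParam p q y)⁻¹ / dist p q ^ 3 *
        μ.real (convexHull ℝ {p, q, x, y}) := by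
  have hpq := ne_of_footParam_ne_zero hx.ne'
  have hpos : ∀ j ≠ 0, 0 < footParam p q (![p, q, x, y] j) := by
    rw [Fin.forall_fin_succ]
    simp [Fin.forall_fin_succ, footParam_right hpq, hx, hy]
  have hprod : ∏ j ∈ Finset.univ.erase 0, dist p q * footParam p q (![p, q, x, y] j) =
      dist p q ^ 3 * (footParam p q x * footParam p q y) := by
    rw [show Finset.univ.erase (0 : Fin 4) = {1, 2, 3} by decide]
    simp only [Fin.isValue, Nat.succ_eq_add_one, Nat.reduceAdd, Finset.mem_insert, Fin.reduceEq,
      Finset.mem_singleton, or_self, not_false_eq_true, Finset.prod_insert, Matrix.cons_val_one,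
      Matrix.cons_val_zero, footParam_right hpq, mul_one, Matrix.cons_val, Finset.prod_singleton]
    ring
  have hcone : μ.real (convexHull ℝ (Set.range ![p, q, x, y]) ∩ Metric.closedBall p 1) ≤
      (∏ j ∈ Finset.univ.erase 0, dist p q * footParam p q (![p, q, x, y] j))⁻¹ *
        μ.real (convexHull ℝ (Set.range ![p, q, x, y])) :=
    measureReal_convexHull_inter_closedBall_one_le μ (by simp [hV]) (i := 0) (k := 1) hpq hpos
  rwa [hprod, range_vec_four, mul_inv, mul_comm (dist p q ^ 3)⁻¹, ← div_eq_mul_inv] at hcone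

theorem measureReal_tetrahedron_inter_closedBall_add_le (hV : Module.finrank ℝ V = 3)
    {p q x y : V} (hx : footParam p q x ∈ Set.Ioo 0 1)
    (hy : footParam p q y ∈ Set.Ioo 0 1) :
    μ.real (convexHull ℝ {p, q, x, y} ∩ Metric.closedBall p 1) +
        μ.real (convexHull ℝ {p, q, x, y} ∩ Metric.closedBall q 1) ≤
      ((footParam p q x * footParam p q y)⁻¹ +
          ((1 - footParam p q x) * (1 - footParam p q y))⁻¹) / dist p q ^ 3 *
        μ.real (convexHull ℝ {p, q, x, y}) := by
  have hpq := ne_of_footParam_ne_zero hx.1.ne'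
  have hp := measureReal_tetrahedron_inter_closedBall_one_le μ hV hx.1 hy.1
  have hq := measureReal_tetrahedron_inter_closedBall_one_le μ hV
    (footParam_swap hpq x ▸ sub_pos.2 hx.2) (footParam_swap hpq y ▸ sub_pos.2 hy.2)
  rw [Set.insert_comm q p, dist_comm q p, footParam_swap hpq, footParam_swap hpq] at hq
  rw [add_div, add_mul]
  exact add_le_add hp hq

end FootParameter

section Estimates

theorem inv_mul_add_inv_one_sub_mul_le {s t : ℝ} (hs : |s - 1 / 2| ≤ 0.0026)
    (ht : |t - 1 / 2| ≤ 0.0026) : (s * t)⁻¹ + ((1 - s) * (1 - t))⁻¹ ≤ 8.001 := by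
  obtain ⟨hs₁, hs₂⟩ := abs_le.1 hs
  obtain ⟨ht₁, ht₂⟩ := abs_le.1 ht
  obtain ⟨σ, rfl⟩ : ∃ σ, s = 1 / 2 + σ := ⟨s - 1 / 2, by ring⟩
  obtain ⟨τ, rfl⟩ : ∃ τ, t = 1 / 2 + τ := ⟨t - 1 / 2, by ring⟩
  have h₁ : 0 < (1 / 2 + σ) * (1 / 2 + τ) := mul_pos (by linarith) (by linarith)
  have h₂ : 0 < (1 - (1 / 2 + σ)) * (1 - (1 / 2 + τ)) := mul_pos (by linarith) (by linarith)
  have hσ : σ ^ 2 ≤ 0.0026 ^ 2 := sq_le_sq' (by linarith) (by linarith)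
  have hτ : τ ^ 2 ≤ 0.0026 ^ 2 := sq_le_sq' (by linarith) (by linarith)
  rw [inv_add_inv h₁.ne' h₂.ne', div_le_iff₀ (mul_pos h₁ h₂)]
  calc (1 / 2 + σ) * (1 / 2 + τ) + (1 - (1 / 2 + σ)) * (1 - (1 / 2 + τ))
      = 1 / 2 + 2 * (σ * τ) := by ring
    _ ≤ 8.001 * ((1 / 4 - 0.0026 ^ 2) * (1 / 4 - 0.0026 ^ 2)) := by
      norm_num at hσ hτ ⊢; linarith [two_mul_le_add_sq σ τ]
    _ ≤ 8.001 * ((1 / 4 - σ ^ 2) * (1 / 4 - τ ^ 2)) := by gcongr; norm_num at hσ ⊢; linarith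
    _ = 8.001 * ((1 / 2 + σ) * (1 / 2 + τ) * ((1 - (1 / 2 + σ)) * (1 - (1 / 2 + τ)))) := by ring

theorem abs_footParam_sub_half_le {V : Type*} [NormedAddCommGroup V] [InnerProductSpace ℝ V]
    {p q x : V} (hpq : 2.818 ≤ dist p q) (hpx : dist p x ∈ Set.Icc (2 : ℝ) 2.01)
    (hqx : dist q x ∈ Set.Icc (2 : ℝ) 2.01) : |footParam p q x - 1 / 2| ≤ 0.0026 := by
  have hsq : ∀ {d : ℝ}, d ∈ Set.Icc (2 : ℝ) 2.01 → d ^ 2 ∈ Set.Icc (2 ^ 2 : ℝ) (2.01 ^ 2) :=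
    fun hd ↦ ⟨by gcongr; exact hd.1, by gcongr; exacts [by linarith [hd.1], hd.2]⟩
  have hne : p ≠ q := dist_pos.1 (by linarith)
  calc |footParam p q x - 1 / 2| = |dist p x ^ 2 - dist q x ^ 2| / (2 * dist p q ^ 2) :=
        abs_footParam_sub_half hne x
    _ ≤ (2.01 ^ 2 - 2 ^ 2) / (2 * 2.818 ^ 2) := by
        gcongr; exact abs_sub_le_of_le_of_le (hsq hpx).1 (hsq hpx).2 (hsq hqx).1 (hsq hqx).2
    _ ≤ 0.0026 := by norm_num

theorem measureReal_tetrahedron_inter_closedBall_add_le_of_near {V : Type*} [NormedAddCommGroup V]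
    [InnerProductSpace ℝ V] [FiniteDimensional ℝ V] [MeasurableSpace V] [BorelSpace V]
    (μ : Measure V) [μ.IsAddHaarMeasure] (hV : Module.finrank ℝ V = 3) {p q x y : V}
    (hpq : 2.818 ≤ dist p q)
    (hpx : dist p x ∈ Set.Icc (2 : ℝ) 2.01) (hpy : dist p y ∈ Set.Icc (2 : ℝ) 2.01)
    (hqx : dist q x ∈ Set.Icc (2 : ℝ) 2.01) (hqy : dist q y ∈ Set.Icc (2 : ℝ) 2.01) :
    μ.real (convexHull ℝ {p, q, x, y} ∩ Metric.closedBall p 1) +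
        μ.real (convexHull ℝ {p, q, x, y} ∩ Metric.closedBall q 1) ≤
      0.358 * μ.real (convexHull ℝ {p, q, x, y}) := by
  have hx := abs_footParam_sub_half_le hpq hpx hqx
  have hy := abs_footParam_sub_half_le hpq hpy hqy
  have hIoo : ∀ {t : ℝ}, |t - 1 / 2| ≤ 0.0026 → t ∈ Set.Ioo 0 1 := fun ht ↦ by
    have := abs_le.1 ht
    constructor <;> norm_num at this ⊢ <;> linarith
  have hfactor : 8.001 / dist p q ^ 3 ≤ 0.358 :=
    calc 8.001 / dist p q ^ 3 ≤ 8.001 / 2.818 ^ 3 := by gcongr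
      _ ≤ 0.358 := by norm_num
  calc _ ≤ _ := measureReal_tetrahedron_inter_closedBall_add_le μ hV (hIoo hx) (hIoo hy)
    _ ≤ 8.001 / dist p q ^ 3 * μ.real (convexHull ℝ {p, q, x, y}) := by
      gcongr; exact inv_mul_add_inv_one_sub_mul_le hx hy
    _ ≤ _ := by gcongr

end Estimates

section AffineDependence

variable {ι V P : Type*} [Fintype ι] [NormedAddCommGroup V] [InnerProductSpace ℝ V]
  [MetricSpace P] [NormedAddTorsor V P]

theorem norm_weightedVSub_sq (p : ι → P) {w : ι → ℝ} (hw : ∑ i, w i = 0) :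
    ‖Finset.univ.weightedVSub p w‖ ^ 2 =
      -(∑ i, ∑ j, w i * w j * dist (p i) (p j) ^ 2) / 2 := by
  simpa only [real_inner_self_eq_norm_sq, sq] using EuclideanGeometry.inner_weightedVSub p hw p hw

theorem not_affineIndependent_iff_exists_sum_mul_dist_sq_eq_zero (p : ι → P) :
    ¬ AffineIndependent ℝ p ↔ ∃ w : ι → ℝ, w ≠ 0 ∧ ∑ i, w i = 0 ∧
      ∑ i, ∑ j, w i * w j * dist (p i) (p j) ^ 2 = 0 := by
  have hzero : ∀ w : ι → ℝ, ∑ i, w i = 0 →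
      (Finset.univ.weightedVSub p w = (0 : V) ↔
        ∑ i, ∑ j, w i * w j * dist (p i) (p j) ^ 2 = 0) := fun w hw ↦ by
    rw [← norm_eq_zero, ← sq_eq_zero_iff, norm_weightedVSub_sq p hw, div_eq_zero_iff,
      or_iff_left two_ne_zero, neg_eq_zero]
  rw [affineIndependent_iff_of_fintype]
  push Not
  refine exists_congr fun w ↦ ⟨fun ⟨hw, hp, i, hi⟩ ↦ ?_, fun ⟨hne, hw, hQ⟩ ↦ ?_⟩
  · exact ⟨fun h ↦ hi (congrFun h i), hw, (hzero w hw).1 hp⟩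
  · exact ⟨hw, (hzero w hw).2 hQ, Function.ne_iff.1 hne⟩

theorem sum_erase_dist_sq_form [DecidableEq ι] (p : ι → P) (a b : ℝ) {w : ι → ℝ}
    (hw : ∑ i, w i = 0) (hQ : ∑ i, ∑ j, w i * w j * dist (p i) (p j) ^ 2 = 0) :
    ∑ i, ∑ j ∈ Finset.univ.erase i, ((dist (p i) (p j) ^ 2 - a) * (w i - w j) ^ 2 +
        (b - dist (p i) (p j) ^ 2) * (w i + w j) ^ 2) =
      2 * (Fintype.card ι * (b - a) - 2 * b) * ∑ i, w i ^ 2 := by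
  have hterm : ∀ i j, (dist (p i) (p j) ^ 2 - a) * (w i - w j) ^ 2 +
      (b - dist (p i) (p j) ^ 2) * (w i + w j) ^ 2 =
        (b - a) * w i ^ 2 + (b - a) * w j ^ 2 + 2 * (a + b) * (w i * w j)
          - 4 * (w i * w j * dist (p i) (p j) ^ 2) := fun i j ↦ by ring
  simp only [Finset.sum_erase_eq_sub (Finset.mem_univ _), hterm, dist_self,
    Finset.sum_sub_distrib, Finset.sum_add_distrib, ← Finset.mul_sum, hw, hQ,
    Finset.sum_const, Finset.card_univ, nsmul_eq_mul, mul_zero, ← sq]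
  simp only [zero_pow two_ne_zero, mul_zero, Finset.sum_const_zero]
  ring

theorem dist_sq_form_terms_eq_zero {p : ι → P} {a b : ℝ}
    (hcard : Fintype.card ι * (b - a) ≤ 2 * b)
    (hp : ∀ i j, i ≠ j → dist (p i) (p j) ^ 2 ∈ Set.Icc a b) {w : ι → ℝ} (hw : ∑ i, w i = 0)
    (hQ : ∑ i, ∑ j, w i * w j * dist (p i) (p j) ^ 2 = 0) {i j : ι} (hij : i ≠ j) :
    (dist (p i) (p j) ^ 2 - a) * (w i - w j) ^ 2 = 0 ∧
      (b - dist (p i) (p j) ^ 2) * (w i + w j) ^ 2 = 0 := by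
  classical
  have hnn₁ : ∀ i j, i ≠ j → 0 ≤ (dist (p i) (p j) ^ 2 - a) * (w i - w j) ^ 2 := fun i j hij ↦
    mul_nonneg (sub_nonneg.2 (hp i j hij).1) (sq_nonneg _)
  have hnn₂ : ∀ i j, i ≠ j → 0 ≤ (b - dist (p i) (p j) ^ 2) * (w i + w j) ^ 2 := fun i j hij ↦
    mul_nonneg (sub_nonneg.2 (hp i j hij).2) (sq_nonneg _)
  have hterm := fun i j (hj : j ∈ Finset.univ.erase i) ↦
    have hij := (Finset.ne_of_mem_erase hj).symm
    add_nonneg (hnn₁ i j hij) (hnn₂ i j hij)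
  have hrow := fun i (_ : i ∈ Finset.univ) ↦ Finset.sum_nonneg (hterm i)
  have htotal := (sum_erase_dist_sq_form p a b hw hQ).trans_le
    (mul_nonpos_of_nonpos_of_nonneg (by linarith) (by positivity))
  have hrow₀ := (Finset.sum_eq_zero_iff_of_nonneg hrow).1
    (htotal.antisymm (Finset.sum_nonneg hrow)) i (Finset.mem_univ i)
  have hterm₀ := (Finset.sum_eq_zero_iff_of_nonneg (hterm i)).1 hrow₀ j
    (Finset.mem_erase.2 ⟨hij.symm, Finset.mem_univ j⟩)
  exact (add_eq_zero_iff_of_nonneg (hnn₁ i j hij) (hnn₂ i j hij)).1 hterm₀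

theorem exists_two_distance_weights_of_not_affineIndependent {p : ι → P} {a b : ℝ} (hab : a < b)
    (hcard : Fintype.card ι * (b - a) ≤ 2 * b)
    (hp : ∀ i j, i ≠ j → dist (p i) (p j) ^ 2 ∈ Set.Icc a b) (hdep : ¬ AffineIndependent ℝ p) :
    ∃ w : ι → ℝ, (∀ i, w i ≠ 0) ∧ ∀ i j, i ≠ j →
      (w j = w i ∧ dist (p i) (p j) ^ 2 = b) ∨ (w j = -w i ∧ dist (p i) (p j) ^ 2 = a) := by
  obtain ⟨w, hne, hw, hQ⟩ := (not_affineIndependent_iff_exists_sum_mul_dist_sq_eq_zero p).1 hdep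
  have hcases : ∀ i j, i ≠ j → w i ≠ 0 →
      (w j = w i ∧ dist (p i) (p j) ^ 2 = b) ∨ (w j = -w i ∧ dist (p i) (p j) ^ 2 = a) := by
    intro i j hij hi
    obtain ⟨h₁, h₂⟩ := dist_sq_form_terms_eq_zero hcard hp hw hQ hij
    rcases mul_eq_zero.1 h₁ with ha | hsub
    · have hb : b - dist (p i) (p j) ^ 2 ≠ 0 := by linarith
      have hadd := sq_eq_zero_iff.1 ((mul_eq_zero.1 h₂).resolve_left hb)
      exact .inr ⟨by linarith, by linarith⟩
    · have hji : w j = w i := (sub_eq_zero.1 (sq_eq_zero_iff.1 hsub)).symm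
      have hadd : (w i + w j) ^ 2 ≠ 0 := by rw [hji, ← two_mul]; positivity
      exact .inl ⟨hji, (sub_eq_zero.1 ((mul_eq_zero.1 h₂).resolve_right hadd)).symm⟩
  obtain ⟨k, hk⟩ := Function.ne_iff.1 hne
  have hw₀ : ∀ i, w i ≠ 0 := fun i ↦ by
    rcases eq_or_ne k i with rfl | hki
    · exact hk
    · rcases hcases k i hki hk with ⟨h, -⟩ | ⟨h, -⟩
      · exact h ▸ hk
      · exact h ▸ neg_ne_zero.2 hk
  exact ⟨w, hw₀, fun i j hij ↦ hcases i j hij (hw₀ i)⟩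

theorem not_affineIndependent_of_parallelogram_law {p₀ p₁ p₂ p₃ : P}
    (h : dist p₀ p₁ ^ 2 + dist p₂ p₃ ^ 2 =
      dist p₀ p₂ ^ 2 + dist p₀ p₃ ^ 2 + dist p₁ p₃ ^ 2 + dist p₁ p₂ ^ 2) :
    ¬ AffineIndependent ℝ ![p₀, p₁, p₂, p₃] := by
  refine (not_affineIndependent_iff_exists_sum_mul_dist_sq_eq_zero _).2
    ⟨![1, 1, -1, -1], fun h ↦ one_ne_zero (congrFun h 0), by simp [Fin.sum_univ_four], ?_⟩
  simp only [Nat.succ_eq_add_one, Nat.reduceAdd, Fin.sum_univ_four, Fin.isValue,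
    Matrix.cons_val_zero, mul_one, Matrix.cons_val_one, Matrix.cons_val, mul_neg, neg_mul,
    dist_self, ne_eq, OfNat.ofNat_ne_zero, not_false_eq_true, zero_pow, mul_zero, one_mul,
    zero_add, dist_comm p₁ p₀, add_zero, dist_comm p₂ p₀, dist_comm p₂ p₁, neg_zero, neg_neg,
    dist_comm p₃ p₀, dist_comm p₃ p₁, dist_comm p₃ p₂]
  linarith

theorem not_affineIndependent_iff_square {a : ℝ} {p₀ p₁ p₂ p₃ : P}
    (h₀₁ : dist p₀ p₁ ^ 2 ∈ Set.Icc a (2 * a)) (h₂₃ : dist p₂ p₃ ^ 2 ∈ Set.Icc a (2 * a))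
    (h₀₂ : dist p₀ p₂ ^ 2 ∈ Set.Ico a (2 * a)) (h₀₃ : dist p₀ p₃ ^ 2 ∈ Set.Ico a (2 * a))
    (h₁₃ : dist p₁ p₃ ^ 2 ∈ Set.Ico a (2 * a)) (h₁₂ : dist p₁ p₂ ^ 2 ∈ Set.Ico a (2 * a)) :
    ¬ AffineIndependent ℝ ![p₀, p₁, p₂, p₃] ↔
      dist p₀ p₁ ^ 2 = 2 * a ∧ dist p₂ p₃ ^ 2 = 2 * a ∧ dist p₀ p₂ ^ 2 = a ∧
        dist p₀ p₃ ^ 2 = a ∧ dist p₁ p₃ ^ 2 = a ∧ dist p₁ p₂ ^ 2 = a := by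
  refine ⟨fun hdep ↦ ?_, fun ⟨e₀₁, e₂₃, e₀₂, e₀₃, e₁₃, e₁₂⟩ ↦
    not_affineIndependent_of_parallelogram_law
      (by linarith [e₀₁, e₂₃, e₀₂, e₀₃, e₁₃, e₁₂])⟩
  have hlt : a < 2 * a := h₀₂.1.trans_lt h₀₂.2
  have hp : ∀ i j, i ≠ j → dist (![p₀, p₁, p₂, p₃] i) (![p₀, p₁, p₂, p₃] j) ^ 2 ∈
      Set.Icc a (2 * a) := by
    replace h₀₂ := Set.Ico_subset_Icc_self h₀₂
    replace h₀₃ := Set.Ico_subset_Icc_self h₀₃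
    replace h₁₃ := Set.Ico_subset_Icc_self h₁₃
    replace h₁₂ := Set.Ico_subset_Icc_self h₁₂
    intro i j hij
    fin_cases i <;> fin_cases j <;>
      first | exact absurd rfl hij | assumption | rw [dist_comm]; assumption
  obtain ⟨w, hw₀, hw⟩ := exists_two_distance_weights_of_not_affineIndependent hlt
    (by rw [Fintype.card_fin]; push_cast; linarith) hp hdep
  have hside : ∀ i j, i ≠ j → dist (![p₀, p₁, p₂, p₃] i) (![p₀, p₁, p₂, p₃] j) ^ 2 < 2 * a →
      w j = -w i ∧ dist (![p₀, p₁, p₂, p₃] i) (![p₀, p₁, p₂, p₃] j) ^ 2 = a :=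
    fun i j hij hij_lt ↦ (hw i j hij).resolve_left fun h ↦ hij_lt.ne h.2
  have s₀₂ := hside 0 2 (by decide) h₀₂.2
  have s₀₃ := hside 0 3 (by decide) h₀₃.2
  have s₁₃ := hside 1 3 (by decide) h₁₃.2
  have s₁₂ := hside 1 2 (by decide) h₁₂.2
  have hdiag : ∀ i j, i ≠ j → w j = w i →
      dist (![p₀, p₁, p₂, p₃] i) (![p₀, p₁, p₂, p₃] j) ^ 2 = 2 * a := fun i j hij hwij ↦
    ((hw i j hij).resolve_right fun h ↦ hw₀ i (by linarith)).2
  exact ⟨hdiag 0 1 (by decide) (by linarith), hdiag 2 3 (by decide) (by linarith),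
    s₀₂.2, s₀₃.2, s₁₃.2, s₁₂.2⟩

end AffineDependence

section OctahedralDensity

theorem pi_div_four_add_le_arccos_one_div_sqrt_three : π / 4 + 0.169 ≤ arccos (1 / √3) := by
  have hcos : 1 - (0.169 : ℝ) ^ 2 / 2 ≤ cos 0.169 := one_sub_sq_div_two_le_cos
  have hsin : sin (0.169 : ℝ) ≤ 0.169 := sin_le (by norm_num)
  have hsqrt₂ : 1.414 ≤ √2 := le_sqrt_of_sq_le (by norm_num)
  have hsqrt₃ : 1.732 ≤ √3 := le_sqrt_of_sq_le (by norm_num)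
  have hvalue : 1 / √3 ≤ cos (π / 4 + 0.169) :=
    calc 1 / √3 ≤ 1 / 1.732 := by gcongr
      _ ≤ 1.414 / 2 * (1 - 0.169 ^ 2 / 2 - 0.169) := by norm_num
      _ ≤ √2 / 2 * (cos 0.169 - sin 0.169) := by gcongr
      _ = cos (π / 4 + 0.169) := by rw [cos_add, cos_pi_div_four, sin_pi_div_four]; ring
  rw [← arccos_cos (x := π / 4 + 0.169) (by positivity) (by linarith [pi_gt_three])]
  exact arccos_le_arccos hvalue

theorem lt_δoct : 0.716 < δoct := by
  have hsqrt₈ : √8 < 2.829 := (sqrt_lt' (by norm_num)).2 (by norm_num)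
  rw [δoct, lt_div_iff₀ (by positivity)]
  linarith [pi_div_four_add_le_arccos_one_div_sqrt_three]

end OctahedralDensity

section NearSquare

variable {V : Type*} [NormedAddCommGroup V] [InnerProductSpace ℝ V] {p₀ p₁ p₂ p₃ : V}

theorem not_affineIndependent_iff_square_of_near
    (h₀₁ : dist p₀ p₁ ∈ Set.Icc (2 * √2 - 0.01) (2 * √2))
    (h₂₃ : dist p₂ p₃ ∈ Set.Icc (2 * √2 - 0.01) (2 * √2))
    (h₀₂ : dist p₀ p₂ ∈ Set.Icc (2 : ℝ) 2.01) (h₀₃ : dist p₀ p₃ ∈ Set.Icc (2 : ℝ) 2.01)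
    (h₁₃ : dist p₁ p₃ ∈ Set.Icc (2 : ℝ) 2.01) (h₁₂ : dist p₁ p₂ ∈ Set.Icc (2 : ℝ) 2.01) :
    ¬ AffineIndependent ℝ ![p₀, p₁, p₂, p₃] ↔
      dist p₀ p₁ = 2 * √2 ∧ dist p₂ p₃ = 2 * √2 ∧ dist p₀ p₂ = 2 ∧ dist p₀ p₃ = 2 ∧
        dist p₁ p₃ = 2 ∧ dist p₁ p₂ = 2 := by
  have hsqrt₂ : 1.414 ≤ √2 := le_sqrt_of_sq_le (by norm_num)
  have hdiag : ∀ {d : ℝ}, 0 ≤ d → (d ^ 2 = 2 * 4 ↔ d = 2 * √2) := fun hd ↦ by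
    rw [← sq_eq_sq₀ hd (by positivity), mul_pow, sq_sqrt zero_le_two]; norm_num
  have hside : ∀ {d : ℝ}, 0 ≤ d → (d ^ 2 = 4 ↔ d = 2) := fun hd ↦ by
    rw [← sq_eq_sq₀ hd zero_le_two]; norm_num
  have hlong : ∀ {d : ℝ}, d ∈ Set.Icc (2 * √2 - 0.01) (2 * √2) →
      d ^ 2 ∈ Set.Icc (4 : ℝ) (2 * 4) := fun {d} hd ↦ by
    have hlower : 2 ≤ d := by norm_num at hsqrt₂ hd; linarith [hd.1]
    have hupper : d ^ 2 ≤ (2 * √2) ^ 2 := by gcongr; exact hd.2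
    rw [(hdiag (by positivity)).2 rfl] at hupper
    exact ⟨by nlinarith, hupper⟩
  have hshort : ∀ {d : ℝ}, d ∈ Set.Icc (2 : ℝ) 2.01 → d ^ 2 ∈ Set.Ico (4 : ℝ) (2 * 4) :=
    fun ⟨h₁, h₂⟩ ↦ ⟨by nlinarith, by nlinarith⟩
  rw [not_affineIndependent_iff_square (hlong h₀₁) (hlong h₂₃) (hshort h₀₂)
    (hshort h₀₃) (hshort h₁₃) (hshort h₁₂)]
  simp only [hdiag dist_nonneg, hside dist_nonneg]

end NearSquare

section Compression

theorem Gamma_eq_measureReal (p₀ p₁ p₂ p₃ : E3) :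
    _root_.Gamma p₀ p₁ p₂ p₃ = -δoct * volume.real (convexHull ℝ {p₀, p₁, p₂, p₃}) +
      volume.real (convexHull ℝ {p₀, p₁, p₂, p₃} ∩
        (Metric.closedBall p₀ 1 ∪ Metric.closedBall p₁ 1 ∪ Metric.closedBall p₂ 1 ∪
          Metric.closedBall p₃ 1)) := rfl

theorem measureReal_inter_union_four_le {α : Type*} [MeasurableSpace α] (μ : Measure α)
    (s t₀ t₁ t₂ t₃ : Set α) :
    μ.real (s ∩ (t₀ ∪ t₁ ∪ t₂ ∪ t₃)) ≤
      μ.real (s ∩ t₀) + μ.real (s ∩ t₁) + (μ.real (s ∩ t₂) + μ.real (s ∩ t₃)) := by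
  simp only [Set.inter_union_distrib_left]
  linarith [measureReal_union_le (μ := μ) (s ∩ t₀ ∪ s ∩ t₁ ∪ s ∩ t₂) (s ∩ t₃),
    measureReal_union_le (μ := μ) (s ∩ t₀ ∪ s ∩ t₁) (s ∩ t₂),
    measureReal_union_le (μ := μ) (s ∩ t₀) (s ∩ t₁)]

theorem Gamma_le_mul_measureReal {p₀ p₁ p₂ p₃ : E3}
    (h₀₁ : 2.818 ≤ dist p₀ p₁) (h₂₃ : 2.818 ≤ dist p₂ p₃)
    (h₀₂ : dist p₀ p₂ ∈ Set.Icc (2 : ℝ) 2.01) (h₀₃ : dist p₀ p₃ ∈ Set.Icc (2 : ℝ) 2.01)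
    (h₁₃ : dist p₁ p₃ ∈ Set.Icc (2 : ℝ) 2.01) (h₁₂ : dist p₁ p₂ ∈ Set.Icc (2 : ℝ) 2.01) :
    _root_.Gamma p₀ p₁ p₂ p₃ ≤
      (0.716 - δoct) * volume.real (convexHull ℝ {p₀, p₁, p₂, p₃}) := by
  have hE3 : Module.finrank ℝ E3 = 3 := finrank_euclideanSpace_fin
  have hvol₀₁ := measureReal_tetrahedron_inter_closedBall_add_le_of_near volume hE3 h₀₁ h₀₂ h₀₃
    h₁₂ h₁₃
  have hvol₂₃ := measureReal_tetrahedron_inter_closedBall_add_le_of_near volume hE3 h₂₃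
    (dist_comm p₀ p₂ ▸ h₀₂) (dist_comm p₁ p₂ ▸ h₁₂) (dist_comm p₀ p₃ ▸ h₀₃)
    (dist_comm p₁ p₃ ▸ h₁₃)
  have hperm : ({p₂, p₃, p₀, p₁} : Set E3) = {p₀, p₁, p₂, p₃} := by
    rw [Set.insert_comm p₃, Set.insert_comm p₂, Set.pair_comm, Set.insert_comm p₂]
  rw [hperm] at hvol₂₃
  rw [Gamma_eq_measureReal]
  linarith [measureReal_inter_union_four_le volume (convexHull ℝ {p₀, p₁, p₂, p₃})
    (Metric.closedBall p₀ 1) (Metric.closedBall p₁ 1) (Metric.closedBall p₂ 1)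
    (Metric.closedBall p₃ 1)]

theorem Gamma_eq_zero_of_measureReal_eq_zero {p₀ p₁ p₂ p₃ : E3}
    (h : volume.real (convexHull ℝ {p₀, p₁, p₂, p₃}) = 0) : _root_.Gamma p₀ p₁ p₂ p₃ = 0 := by
  have hfin : volume (convexHull ℝ {p₀, p₁, p₂, p₃}) ≠ ⊤ :=
    measure_convexHull_ne_top volume (Set.toFinite _)
  rw [Gamma_eq_measureReal, h, measureReal_mono_null Set.inter_subset_left h hfin, mul_zero,
    add_zero]

theorem compression_nonpos_near_S1_general (p₀ p₁ p₂ p₃ : E3)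
    (h1 : dist p₀ p₁ ∈ Set.Icc (2 * √2 - 0.01) (2 * √2))
    (h4 : dist p₂ p₃ ∈ Set.Icc (2 * √2 - 0.01) (2 * √2))
    (h2 : dist p₀ p₂ ∈ Set.Icc (2 : ℝ) 2.01) (h3 : dist p₀ p₃ ∈ Set.Icc (2 : ℝ) 2.01)
    (h5 : dist p₁ p₃ ∈ Set.Icc (2 : ℝ) 2.01) (h6 : dist p₁ p₂ ∈ Set.Icc (2 : ℝ) 2.01) :
    _root_.Gamma p₀ p₁ p₂ p₃ ≤ 0 ∧
    (_root_.Gamma p₀ p₁ p₂ p₃ = 0 ↔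
      (dist p₀ p₁ = 2 * √2 ∧ dist p₂ p₃ = 2 * √2 ∧
        dist p₀ p₂ = 2 ∧ dist p₀ p₃ = 2 ∧ dist p₁ p₃ = 2 ∧ dist p₁ p₂ = 2)) := by
  have hlong : 2.818 ≤ 2 * √2 - 0.01 := by
    have : 1.4142 ≤ √2 := le_sqrt_of_sq_le (by norm_num)
    norm_num at this ⊢; linarith
  have hle := Gamma_le_mul_measureReal (hlong.trans h1.1) (hlong.trans h4.1) h2 h3 h5 h6
  have hneg : 0.716 - δoct < 0 := sub_neg.2 lt_δoct
  have hflat := measureReal_convexHull_range_eq_zero_iff (p := ![p₀, p₁, p₂, p₃]) volume (by simp)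
  rw [range_vec_four] at hflat
  rw [← not_affineIndependent_iff_square_of_near h1 h4 h2 h3 h5 h6, ← hflat]
  refine ⟨hle.trans (mul_nonpos_of_nonpos_of_nonneg hneg.le measureReal_nonneg),
    fun hzero ↦ ?_, Gamma_eq_zero_of_measureReal_eq_zero⟩
  exact (nonpos_of_mul_nonneg_right (hzero ▸ hle) hneg).antisymm measureReal_nonneg

end Compression

/-- Appendix: in the `0.01`-neighborhood of `S₁ = S(2√2,2,2,2√2,2,2)`, a small simplex
satisfies `Γ(S) ≤ 0`, with equality exactly at `S₁`. -/
theorem compression_nonpos_near_S1 (p₀ p₁ p₂ p₃ : E3)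
    (hsmall : IsSmall p₀ p₁ p₂ p₃)
    (h1 : dist p₀ p₁ ∈ Set.Icc (2 * Real.sqrt 2 - 0.01) (2 * Real.sqrt 2))
    (h4 : dist p₂ p₃ ∈ Set.Icc (2 * Real.sqrt 2 - 0.01) (2 * Real.sqrt 2))
    (h2 : dist p₀ p₂ ∈ Set.Icc (2 : ℝ) 2.01) (h3 : dist p₀ p₃ ∈ Set.Icc (2 : ℝ) 2.01)
    (h5 : dist p₁ p₃ ∈ Set.Icc (2 : ℝ) 2.01) (h6 : dist p₁ p₂ ∈ Set.Icc (2 : ℝ) 2.01) :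
    Gamma p₀ p₁ p₂ p₃ ≤ 0 ∧
    (Gamma p₀ p₁ p₂ p₃ = 0 ↔
      (dist p₀ p₁ = 2 * Real.sqrt 2 ∧ dist p₂ p₃ = 2 * Real.sqrt 2 ∧
        dist p₀ p₂ = 2 ∧ dist p₀ p₃ = 2 ∧ dist p₁ p₃ = 2 ∧ dist p₁ p₂ = 2)) := by
  exact compression_nonpos_near_S1_general p₀ p₁ p₂ p₃ h1 h4 h2 h3 h5 h6
end
end
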